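/- arXiv:2305.12615 — 3 statements merged into one kernel-verified Lean document; each statement's English description precedes it below -/
import Mathlib

section
/- Let 0 < θ₂ < 1, θ > θ₂, ε > 0, ρ^* > 1, and let C, C₀, D be positive constants. Let d : (0,∞) → ℝ be a measurable function with 0 < d(s) ≤ D for all s > 0 and |d(r) − (1+θ₂)| ≤ C₀ r^{−ε} for all r ≥ ρ^*. Let x : (0,∞) → [0,∞) be measurable and locally integrable, and suppose x(t) ≤ C t^{θ} ln t + t^{−1} ∫₀^t d(s) x(s) ds for all t ≥ ρ^*. Then there exists a constant C̃ > 0, independent of t, such that x(t) ≤ C̃ t^{θ} ln t for all t ≥ ρ^*. -/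
open Set MeasureTheory Filter

/-!
Put `w t = t ^ θ * log t` and let `S` be the best constant in `x ≤ S * w` on a window `[R, T]`. Past
a large `R` the coefficient `d` stays below some `b < 1 + θ`, while `t⁻¹ * ∫ s in R..t, w s` is at
most `w t / (1 + θ)`; inserting `x ≤ S * w` into the integral inequality therefore gives
`S ≤ K + q * S` with `q = b / (1 + θ) < 1`, where `K` also absorbs the fixed mass
`∫ s in 0..R, d s * x s`. Hence `S ≤ K / (1 - q)` independently of `T`.
-/

theorem le_div_one_sub_of_upperBound_improves {α : Type*} {s : Set α} {f : α → ℝ} {K q : ℝ}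
    (hq : q < 1) (hf : BddAbove (f '' s))
    (himprove : ∀ S, (∀ t ∈ s, f t ≤ S) → ∀ t ∈ s, f t ≤ K + q * S) {t : α} (ht : t ∈ s) :
    f t ≤ K / (1 - q) := by
  have hlub : IsLUB (f '' s) (sSup (f '' s)) := isLUB_csSup ⟨f t, mem_image_of_mem f ht⟩ hf
  have hle : ∀ u ∈ s, f u ≤ sSup (f '' s) := fun u hu => hlub.1 (mem_image_of_mem f hu)
  have hsup : sSup (f '' s) ≤ K + q * sSup (f '' s) :=
    hlub.2 (forall_mem_image.2 (himprove _ hle))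
  refine (hle t ht).trans ((le_div_iff₀ (sub_pos.2 hq)).2 ?_)
  linarith

section Volterra

variable {a b C M q R ρ : ℝ} {d g k w x : ℝ → ℝ}

theorem integral_nonneg_of_forall_lt {T : ℝ} (haT : a ≤ T) (hg : ∀ s, a < s → 0 ≤ g s) :
    0 ≤ ∫ s in a..T, g s := by
  rw [intervalIntegral.integral_of_le haT]
  exact setIntegral_nonneg measurableSet_Ioc fun s hs => hg s hs.1

theorem le_mul_of_le_add_mul_integral_of_le {t T : ℝ} (hat : a ≤ t) (htT : t ≤ T)
    (hg : ∀ s, a < s → 0 ≤ g s) (hgi : IntervalIntegrable g volume a T)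
    (hk : 0 ≤ k t) (hkw : k t ≤ M * w t)
    (hineq : x t ≤ C * w t + k t * ∫ s in a..t, g s) :
    x t ≤ (C + M * ∫ s in a..T, g s) * w t := by
  have hg_ae : 0 ≤ᵐ[volume.restrict (Ioc a T)] g :=
    (ae_restrict_mem measurableSet_Ioc).mono fun s hs => hg s hs.1
  have hmono : ∫ s in a..t, g s ≤ ∫ s in a..T, g s :=
    intervalIntegral.integral_mono_interval le_rfl hat htT hg_ae hgi
  have hnonneg : 0 ≤ ∫ s in a..T, g s := integral_nonneg_of_forall_lt (hat.trans htT) hg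
  calc x t ≤ C * w t + k t * ∫ s in a..T, g s := by grw [hineq, hmono]
    _ ≤ C * w t + M * w t * ∫ s in a..T, g s := by grw [hkw]
    _ = (C + M * ∫ s in a..T, g s) * w t := by ring

theorem integral_mul_le_of_le_mul {S t : ℝ} (hRt : R ≤ t)
    (hd : ∀ s ∈ Icc R t, 0 ≤ d s) (hdb : ∀ s ∈ Icc R t, d s ≤ b)
    (hx : ∀ s ∈ Icc R t, 0 ≤ x s) (hxw : ∀ s ∈ Icc R t, x s ≤ S * w s)
    (hdx : IntervalIntegrable (fun s => d s * x s) volume R t)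
    (hw : IntervalIntegrable w volume R t) :
    ∫ s in R..t, d s * x s ≤ b * S * ∫ s in R..t, w s := by
  rw [← intervalIntegral.integral_const_mul]
  refine intervalIntegral.integral_mono_on hRt hdx (hw.const_mul _) fun s hs => ?_
  rw [mul_assoc]
  exact mul_le_mul (hdb s hs) (hxw s hs) (hx s hs) ((hd s hs).trans (hdb s hs))

theorem le_mul_of_le_add_mul_integral_of_forall_le_mul {S t : ℝ} (haR : a < R) (hRt : R ≤ t)
    (hd : ∀ s, a < s → 0 ≤ d s) (hdb : ∀ s, R ≤ s → d s ≤ b) (hx : ∀ s, a < s → 0 ≤ x s)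
    (hdx : ∀ t, a < t → IntervalIntegrable (fun s => d s * x s) volume a t)
    (hw : IntervalIntegrable w volume R t) (hw_pos : 0 < w t)
    (hk : 0 ≤ k t) (hkw : k t ≤ M * w t)
    (habsorb : k t * (b * ∫ s in R..t, w s) ≤ q * w t)
    (hineq : x t ≤ C * w t + k t * ∫ s in a..t, d s * x s)
    (hxw : ∀ s ∈ Icc R t, x s ≤ S * w s) :
    x t ≤ (C + M * (∫ s in a..R, d s * x s) + q * S) * w t := by
  have hat : a < t := haR.trans_le hRt
  have hRt_int := (hdx R haR).symm.trans (hdx t hat)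
  have hS : 0 ≤ S :=
    nonneg_of_mul_nonneg_left ((hx t hat).trans (hxw t (right_mem_Icc.2 hRt))) hw_pos
  have htail : k t * ∫ s in R..t, d s * x s ≤ q * S * w t :=
    calc k t * ∫ s in R..t, d s * x s
        ≤ k t * (b * S * ∫ s in R..t, w s) := by
          gcongr
          exact integral_mul_le_of_le_mul hRt (fun s hs => hd s (haR.trans_le hs.1))
            (fun s hs => hdb s hs.1) (fun s hs => hx s (haR.trans_le hs.1)) hxw hRt_int hw
      _ = S * (k t * (b * ∫ s in R..t, w s)) := by ring
      _ ≤ S * (q * w t) := by gcongr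
      _ = q * S * w t := by ring
  have hhead : k t * ∫ s in a..R, d s * x s ≤ M * w t * ∫ s in a..R, d s * x s :=
    mul_le_mul_of_nonneg_right hkw <|
      integral_nonneg_of_forall_lt haR.le fun s hs => mul_nonneg (hd s hs) (hx s hs)
  rw [← intervalIntegral.integral_add_adjacent_intervals (hdx R haR) hRt_int] at hineq
  linarith

theorem exists_pos_forall_le_mul_of_le_add_mul_integral (haρ : a < ρ) (hρR : ρ ≤ R) (hq : q < 1)
    (hd : ∀ s, a < s → 0 ≤ d s) (hdb : ∀ s, R ≤ s → d s ≤ b) (hx : ∀ s, a < s → 0 ≤ x s)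
    (hdx : ∀ t, a < t → IntervalIntegrable (fun s => d s * x s) volume a t)
    (hw : ∀ t, R ≤ t → IntervalIntegrable w volume R t) (hw_pos : ∀ t, ρ ≤ t → 0 < w t)
    (hk : ∀ t, ρ ≤ t → 0 ≤ k t) (hkw : ∀ t, ρ ≤ t → k t ≤ M * w t)
    (habsorb : ∀ t, R ≤ t → k t * (b * ∫ s in R..t, w s) ≤ q * w t)
    (hineq : ∀ t, ρ ≤ t → x t ≤ C * w t + k t * ∫ s in a..t, d s * x s) :
    ∃ K, 0 < K ∧ ∀ t, ρ ≤ t → x t ≤ K * w t := by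
  set A := C + M * ∫ s in a..R, d s * x s
  have hcrude : ∀ t T, ρ ≤ t → t ≤ T → x t ≤ (C + M * ∫ s in a..T, d s * x s) * w t :=
    fun t T ht htT => le_mul_of_le_add_mul_integral_of_le (haρ.le.trans ht) htT
      (fun s hs => mul_nonneg (hd s hs) (hx s hs)) (hdx T (haρ.trans_le (ht.trans htT)))
      (hk t ht) (hkw t ht) (hineq t ht)
  have htail : ∀ T, R ≤ T → x T / w T ≤ A / (1 - q) := by
    intro T hT
    refine le_div_one_sub_of_upperBound_improves (s := Icc R T) (f := fun t => x t / w t) hq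
      ⟨C + M * ∫ s in a..T, d s * x s, ?_⟩ (fun S hS t ht => ?_) (right_mem_Icc.2 hT)
    · rintro _ ⟨t, ht, rfl⟩
      have hρt := hρR.trans ht.1
      exact (div_le_iff₀ (hw_pos t hρt)).2 (hcrude t T hρt ht.2)
    · have hρt := hρR.trans ht.1
      refine (div_le_iff₀ (hw_pos t hρt)).2 <|
        le_mul_of_le_add_mul_integral_of_forall_le_mul (haρ.trans_le hρR) ht.1 hd hdb hx hdx
          (hw t ht.1) (hw_pos t hρt) (hk t hρt) (hkw t hρt) (habsorb t ht.1) (hineq t hρt)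
          fun s hs => ?_
      exact (div_le_iff₀ (hw_pos s (hρR.trans hs.1))).1 (hS s ⟨hs.1, hs.2.trans ht.2⟩)
  refine ⟨max (max A (A / (1 - q))) 1, by positivity, fun t ht => ?_⟩
  rw [← div_le_iff₀ (hw_pos t ht)]
  rcases le_total t R with htR | hRt
  · have : x t / w t ≤ A := (div_le_iff₀ (hw_pos t ht)).2 (hcrude t R ht htR)
    exact le_max_of_le_left (le_max_of_le_left this)
  · exact le_max_of_le_left (le_max_of_le_right (htail t hRt))

end Volterra

section PowerLogWeight

variable {θ ρ R t : ℝ}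

theorem intervalIntegrable_rpow_mul_log (hR : 0 < R) (ht : 0 < t) :
    IntervalIntegrable (fun s => s ^ θ * Real.log s) volume R t := by
  have hne : ∀ s ∈ uIcc R t, s ≠ 0 := fun s hs => ((lt_min hR ht).trans_le hs.1).ne'
  exact ContinuousOn.intervalIntegrable <|
    (continuousOn_id.rpow_const fun s hs => .inl (hne s hs)).mul (continuousOn_id.log hne)

theorem inv_mul_integral_rpow_mul_log_le (hθ : -1 < θ) (hR : 0 < R) (hRt : R ≤ t) (ht : 1 ≤ t) :
    t⁻¹ * ∫ s in R..t, s ^ θ * Real.log s ≤ t ^ θ * Real.log t / (θ + 1) := by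
  have ht0 : 0 < t := hR.trans_le hRt
  have hθ1 : 0 < θ + 1 := by linarith
  have hlog : 0 ≤ Real.log t := Real.log_nonneg ht
  rw [inv_mul_le_iff₀ ht0]
  calc ∫ s in R..t, s ^ θ * Real.log s
      ≤ ∫ s in R..t, s ^ θ * Real.log t := by
        refine intervalIntegral.integral_mono_on hRt (intervalIntegrable_rpow_mul_log hR ht0)
          ((intervalIntegral.intervalIntegrable_rpow' hθ).mul_const _) fun s hs => ?_
        have hs0 : 0 < s := hR.trans_le hs.1
        gcongr
        exact hs.2
    _ = (t ^ (θ + 1) - R ^ (θ + 1)) / (θ + 1) * Real.log t := by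
        rw [intervalIntegral.integral_mul_const, integral_rpow (.inl hθ)]
    _ ≤ t ^ (θ + 1) / (θ + 1) * Real.log t := by
        gcongr
        exact sub_le_self _ (by positivity)
    _ = t * (t ^ θ * Real.log t / (θ + 1)) := by
        rw [Real.rpow_add_one ht0.ne']
        ring

theorem inv_le_inv_log_mul_rpow_mul_log (hθ : -1 ≤ θ) (hρ : 1 < ρ) (hρt : ρ ≤ t) :
    t⁻¹ ≤ (Real.log ρ)⁻¹ * (t ^ θ * Real.log t) := by
  have ht : 1 ≤ t := hρ.le.trans hρt
  rw [le_inv_mul_iff₀ (Real.log_pos hρ), mul_comm, ← Real.rpow_neg_one]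
  have hlog : 0 ≤ Real.log ρ := Real.log_nonneg hρ.le
  gcongr

end PowerLogWeight

theorem intervalIntegrable_mul_of_norm_le {f g : ℝ → ℝ} {a t D : ℝ}
    (hf : AEStronglyMeasurable f) (hfD : ∀ s ∈ uIoc a t, ‖f s‖ ≤ D)
    (hg : IntervalIntegrable g volume a t) :
    IntervalIntegrable (fun s => f s * g s) volume a t :=
  intervalIntegrable_iff.2 <| (intervalIntegrable_iff.1 hg).bdd_mul hf.restrict <|
    (ae_restrict_mem measurableSet_uIoc).mono hfD

theorem tendsto_of_abs_sub_le_mul_rpow_neg {f : ℝ → ℝ} {C L ε ρ : ℝ} (hε : 0 < ε)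
    (hf : ∀ r, ρ ≤ r → |f r - L| ≤ C * r ^ (-ε)) : Tendsto f atTop (nhds L) := by
  refine tendsto_sub_nhds_zero_iff.1 (squeeze_zero_norm' ((eventually_ge_atTop ρ).mono hf) ?_)
  simpa using (tendsto_rpow_neg_atTop hε).const_mul C

theorem gronwall_variant_log_general {θ b ρ C : ℝ} (hb : b < 1 + θ) (hρ : 1 < ρ) {d x : ℝ → ℝ}
    (hd : ∀ s, 0 < s → 0 ≤ d s) (hdb : ∀ᶠ s in atTop, d s ≤ b) (hx : ∀ s, 0 < s → 0 ≤ x s)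
    (hdx : ∀ t, 0 < t → IntervalIntegrable (fun s => d s * x s) volume 0 t)
    (hineq : ∀ t, ρ ≤ t →
      x t ≤ C * t ^ θ * Real.log t + t⁻¹ * ∫ s in (0 : ℝ)..t, d s * x s) :
    ∃ K, 0 < K ∧ ∀ t, ρ ≤ t → x t ≤ K * t ^ θ * Real.log t := by
  obtain ⟨R, hρR, hdR⟩ := (atTop_basis' ρ).eventually_iff.1 hdb
  have hρ0 : 0 < ρ := one_pos.trans hρ
  have hR : 0 < R := hρ0.trans_le hρR
  have hb0 : 0 ≤ b := (hd R hR).trans (hdR self_mem_Ici)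
  have hθ : -1 < θ := by linarith
  simp only [mul_assoc] at hineq ⊢
  refine exists_pos_forall_le_mul_of_le_add_mul_integral (w := fun t => t ^ θ * Real.log t)
    (q := b / (θ + 1)) hρ0 hρR ((div_lt_one (by linarith)).2 (by linarith)) hd
    (fun s hs => hdR hs) hx hdx
    (fun t ht => intervalIntegrable_rpow_mul_log hR (hR.trans_le ht))
    (fun t ht => mul_pos (Real.rpow_pos_of_pos (hρ0.trans_le ht) θ)
      (Real.log_pos (hρ.trans_le ht)))
    (fun t ht => inv_nonneg.2 (hρ0.le.trans ht))
    (fun t ht => inv_le_inv_log_mul_rpow_mul_log hθ.le hρ ht) (fun t ht => ?_) hineq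
  calc t⁻¹ * (b * ∫ s in R..t, s ^ θ * Real.log s)
      = b * (t⁻¹ * ∫ s in R..t, s ^ θ * Real.log s) := by ring
    _ ≤ b * (t ^ θ * Real.log t / (θ + 1)) := by
        gcongr
        exact inv_mul_integral_rpow_mul_log_le hθ hR ht (hρ.le.trans (hρR.trans ht))
    _ = b / (θ + 1) * (t ^ θ * Real.log t) := by ring

theorem gronwall_variant_log
    (θ₂ θ εe ρs C C₀ D : ℝ)
    (hθ₂ : 0 < θ₂) (hθ₂1 : θ₂ < 1) (hθ : θ₂ < θ) (hεe : 0 < εe) (hρs : 1 < ρs)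
    (hC : 0 < C) (hC₀ : 0 < C₀) (hD : 0 < D)
    (d x : ℝ → ℝ)
    (hd_meas : Measurable d)
    (hd_pos : ∀ s : ℝ, 0 < s → 0 < d s ∧ d s ≤ D)
    (hd_asymp : ∀ r : ℝ, ρs ≤ r → |d r - (1 + θ₂)| ≤ C₀ * r ^ (-εe))
    (hx_meas : Measurable x)
    (hx_nn : ∀ t : ℝ, 0 < t → 0 ≤ x t)
    (hx_int : ∀ t : ℝ, 0 < t → IntervalIntegrable x volume 0 t)
    (hx_ineq : ∀ t : ℝ, ρs ≤ t →
      x t ≤ C * t ^ θ * Real.log t + t⁻¹ * ∫ s in (0:ℝ)..t, d s * x s) :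
    ∃ Ct : ℝ, 0 < Ct ∧ ∀ t : ℝ, ρs ≤ t → x t ≤ Ct * t ^ θ * Real.log t := by
  obtain ⟨b, hb, hbθ⟩ := exists_between (add_lt_add_right hθ 1)
  have hd_norm : ∀ s, 0 < s → ‖d s‖ ≤ D := fun s hs =>
    (Real.norm_of_nonneg (hd_pos s hs).1.le).trans_le (hd_pos s hs).2
  exact gronwall_variant_log_general hbθ hρs (fun s hs => (hd_pos s hs).1.le)
    ((tendsto_of_abs_sub_le_mul_rpow_neg hεe hd_asymp).eventually_le_const hb) hx_nn
    (fun t ht => intervalIntegrable_mul_of_norm_le hd_meas.aestronglyMeasurable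
      (fun s hs => hd_norm s ((le_min le_rfl ht.le).trans_lt hs.1)) (hx_int t ht)) hx_ineq
end

section
/- Under the hypotheses (H1)–(H3) on the pressure P, with k(ρ) = ∫₀^ρ √(P'(y))/y dy, λ₁ = (3−γ₁)/(2(γ₁−1)), M_{λ₁} = (2λ₁ (2λ₁+1)^{−1/2} ∫_{−1}^{1} (1−z²)^{λ₁} dz)^{−1}, a₁(ρ) = M_{λ₁} k(ρ)^{−λ₁} k'(ρ)^{−1/2}, and a₂(ρ) = −(4(λ₁+1))^{−1} k(ρ)^{−λ₁−1} k'(ρ)^{−1/2} ∫₀^ρ k(s)^{λ₁} k'(s)^{−1/2} a₁''(s) ds (the integral converges), the following holds: for every ρ_max > 0 there exists a constant C(ρ_max) > 0 such that, with θ₁ = (γ₁−1)/2, for all ρ ∈ (0, ρ_max]: |a₁(ρ)| + ρ^{1−2θ₁}|a₁'(ρ)| + ρ^{2−2θ₁}|a₁''(ρ)| + |a₂(ρ)| + ρ|a₂'(ρ)| + ρ²|a₂''(ρ)| ≤ C(ρ_max). -/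
open Set MeasureTheory Filter

/-!
Near the vacuum `P(ρ) = κ₁ρ^γ₁ + O(ρ^(γ₁+ν))` with `ν = γ₁ - 1 = 2θ₁`, and the expansion may be
differentiated. Expansions of this kind survive differentiation, integration from `0`, products and
real powers, so `k ~ cρ^θ₁` and, since `2θ₁λ₁ = 1 - θ₁`, the powers of `ρ` in `a₁` cancel:
`a₁ = A + O(ρ^ν)`. Only the error term contributes to `a₁''`, which is therefore `O(ρ^(ν-2))`; the
integrand defining `a₂` is then `O(ρ^(ν-θ₁-1))`, and the prefactor `O(ρ^(-θ₁))` leaves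
`a₂ = O(ρ^(ν-2θ₁)) = O(1)`. Away from the vacuum, on `[δ, ρ_max]`, everything is bounded by
continuity.
-/

section EntropyKernelCoefficients

open Asymptotics
open scoped Topology

/-- Symbols of order `m` at `0+`: functions of class `C^n` on `(0, ∞)` whose `j`-th derivative is
`O(x ^ (m - j))` as `x → 0+`, for all `j ≤ n`. They quantify the error terms of expansions that may
be differentiated; nothing is required of the values on `(-∞, 0]`. -/
structure IsSymbolAtZero (n : ℕ) (m : ℝ) (f : ℝ → ℝ) : Prop where
  contDiffOn : ContDiffOn ℝ n f (Ioi 0)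
  isBigO_iteratedDeriv : ∀ j ≤ n, iteratedDeriv j f =O[𝓝[>] 0] fun x => x ^ (m - j)

theorem isBigO_mul_rpow_add {m p : ℝ} {f g : ℝ → ℝ} (hf : f =O[𝓝[>] 0] fun x => x ^ m)
    (hg : g =O[𝓝[>] 0] fun x => x ^ p) :
    (fun x => f x * g x) =O[𝓝[>] 0] fun x => x ^ (m + p) := by
  refine (hf.mul hg).congr' .rfl ?_
  filter_upwards [self_mem_nhdsWithin] with x hx using (Real.rpow_add hx m p).symm

theorem rpow_isBigO_rpow_nhdsGT_zero {m p : ℝ} (hpm : p ≤ m) :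
    (fun x : ℝ => x ^ m) =O[𝓝[>] 0] fun x => x ^ p := by
  refine .of_norm_eventuallyLE ?_
  filter_upwards [Ioo_mem_nhdsGT (zero_lt_one (α := ℝ))] with x hx
  rw [Real.norm_of_nonneg (Real.rpow_nonneg hx.1.le _)]
  exact Real.rpow_le_rpow_of_exponent_ge hx.1 hx.2.le hpm

theorem exists_abs_le_on_Ioc_of_isBigO_one {f : ℝ → ℝ} (hf : ContinuousOn f (Ioi 0))
    (hO : f =O[𝓝[>] 0] fun _ => (1 : ℝ)) (R : ℝ) : ∃ C > 0, ∀ x ∈ Ioc 0 R, |f x| ≤ C := by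
  obtain ⟨A, hA⟩ := hO.bound
  obtain ⟨δ, hδ : 0 < δ, hnear⟩ := mem_nhdsGT_iff_exists_Ioo_subset.1 hA
  obtain ⟨B, hB⟩ := isCompact_Icc.exists_bound_of_continuousOn
    (hf.mono fun x (hx : x ∈ Icc δ R) => hδ.trans_le hx.1)
  refine ⟨max 1 (max A B), by positivity, fun x hx => ?_⟩
  rcases lt_or_ge x δ with hlt | hge
  · have : |f x| ≤ A := by simpa using hnear ⟨hx.1, hlt⟩
    exact this.trans ((le_max_left _ _).trans (le_max_right _ _))
  · exact (hB x ⟨hge, hx.2⟩).trans ((le_max_right _ _).trans (le_max_right _ _))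

namespace IsSymbolAtZero

variable {n : ℕ} {m p : ℝ} {f g : ℝ → ℝ}

theorem isBigO (hf : IsSymbolAtZero n m f) : f =O[𝓝[>] 0] fun x => x ^ m := by
  simpa using hf.isBigO_iteratedDeriv 0 n.zero_le

theorem of_le {k : ℕ} (hf : IsSymbolAtZero n m f) (hkn : k ≤ n) : IsSymbolAtZero k m f :=
  ⟨hf.contDiffOn.of_le (by exact_mod_cast hkn),
    fun j hj => hf.isBigO_iteratedDeriv j (hj.trans hkn)⟩

theorem hasDerivAt (hf : IsSymbolAtZero (n + 1) m f) {x : ℝ} (hx : 0 < x) :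
    HasDerivAt f (deriv f x) x :=
  ((hf.contDiffOn.differentiableOn (by simp)).differentiableAt (Ioi_mem_nhds hx)).hasDerivAt

theorem zero_iff :
    IsSymbolAtZero 0 m f ↔ ContinuousOn f (Ioi 0) ∧ f =O[𝓝[>] 0] fun x => x ^ m := by
  refine ⟨fun hf => ⟨hf.contDiffOn.continuousOn, hf.isBigO⟩, fun hf => ⟨contDiffOn_zero.2 hf.1, ?_⟩⟩
  simpa using hf.2

theorem succ_iff : IsSymbolAtZero (n + 1) m f ↔
    DifferentiableOn ℝ f (Ioi 0) ∧ (f =O[𝓝[>] 0] fun x => x ^ m) ∧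
      IsSymbolAtZero n (m - 1) (deriv f) := by
  have hexp (j : ℕ) : m - ((j + 1 : ℕ) : ℝ) = m - 1 - j := by push_cast; ring
  have hsmooth := contDiffOn_succ_iff_deriv_of_isOpen (𝕜 := ℝ) (f := f) (n := n)
    (isOpen_Ioi (a := (0 : ℝ)))
  constructor
  · refine fun hf => ⟨hf.contDiffOn.differentiableOn (by simp), hf.isBigO,
      (hsmooth.1 hf.contDiffOn).2.2, fun j hj => ?_⟩
    simpa only [iteratedDeriv_succ', hexp] using hf.isBigO_iteratedDeriv (j + 1) (by lia)
  · refine fun ⟨hdiff, hO, hderiv⟩ => ⟨hsmooth.2 ⟨hdiff, by simp, hderiv.contDiffOn⟩, ?_⟩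
    rintro (_ | j) hj
    · simpa using hO
    · simpa only [iteratedDeriv_succ', hexp] using hderiv.isBigO_iteratedDeriv j (by lia)

theorem deriv (hf : IsSymbolAtZero (n + 1) m f) : IsSymbolAtZero n (m - 1) (deriv f) :=
  (succ_iff.1 hf).2.2

theorem congr (hf : IsSymbolAtZero n m f) (hmp : m = p) (hgf : EqOn g f (Ioi 0)) :
    IsSymbolAtZero n p g := by
  subst hmp
  refine ⟨hf.contDiffOn.congr hgf, fun j hj => (hf.isBigO_iteratedDeriv j hj).congr' ?_ .rfl⟩
  filter_upwards [self_mem_nhdsWithin] with x hx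
  exact (hgf.symm.eventuallyEq_of_mem (Ioi_mem_nhds hx)).iteratedDeriv_eq j

theorem of_hasDerivAt {f' : ℝ → ℝ} (hff' : ∀ x > 0, HasDerivAt f (f' x) x)
    (hO : f =O[𝓝[>] 0] fun x => x ^ m) (hf' : IsSymbolAtZero n (m - 1) f') :
    IsSymbolAtZero (n + 1) m f :=
  succ_iff.2 ⟨fun x hx => (hff' x hx).differentiableAt.differentiableWithinAt, hO,
    hf'.congr rfl fun x hx => (hff' x hx).deriv⟩

theorem mono (hf : IsSymbolAtZero n m f) (hpm : p ≤ m) : IsSymbolAtZero n p f :=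
  ⟨hf.contDiffOn, fun j hj =>
    (hf.isBigO_iteratedDeriv j hj).trans (rpow_isBigO_rpow_nhdsGT_zero (by linarith))⟩

theorem add (hf : IsSymbolAtZero n m f) (hg : IsSymbolAtZero n m g) :
    IsSymbolAtZero n m fun x => f x + g x := by
  induction n generalizing m f g with
  | zero =>
    rw [zero_iff] at *
    exact ⟨hf.1.add hg.1, hf.2.add hg.2⟩
  | succ n ih =>
    exact of_hasDerivAt (fun x hx => (hf.hasDerivAt hx).add (hg.hasDerivAt hx))
      (hf.isBigO.add hg.isBigO) (ih hf.deriv hg.deriv)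

theorem mul (hf : IsSymbolAtZero n m f) (hg : IsSymbolAtZero n p g) :
    IsSymbolAtZero n (m + p) fun x => f x * g x := by
  induction n generalizing m p f g with
  | zero =>
    rw [zero_iff] at *
    exact ⟨hf.1.mul hg.1, isBigO_mul_rpow_add hf.2 hg.2⟩
  | succ n ih =>
    refine of_hasDerivAt (fun x hx => (hf.hasDerivAt hx).mul (hg.hasDerivAt hx))
      (isBigO_mul_rpow_add hf.isBigO hg.isBigO) (.add ?_ ?_)
    · exact (ih hf.deriv (hg.of_le n.le_succ)).congr (by ring) fun _ _ => rfl
    · exact (ih (hf.of_le n.le_succ) hg.deriv).congr (by ring) fun _ _ => rfl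

theorem const_mul_rpow (n : ℕ) (c p : ℝ) : IsSymbolAtZero n p fun x => c * x ^ p := by
  induction n generalizing c p with
  | zero =>
    refine zero_iff.2 ⟨fun x hx => ?_, isBigO_const_mul_self _ _ _⟩
    exact ((Real.continuousAt_rpow_const x p (.inl (ne_of_gt hx))).const_mul c).continuousWithinAt
  | succ n ih =>
    refine of_hasDerivAt (fun x hx => (Real.hasDerivAt_rpow_const (.inl hx.ne')).const_mul c)
      (isBigO_const_mul_self _ _ _) ((ih (c * p) (p - 1)).congr rfl fun x _ => ?_)
    ring

theorem const (n : ℕ) (c : ℝ) : IsSymbolAtZero n 0 fun _ => c :=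
  (const_mul_rpow n c 0).congr rfl fun x _ => by simp

theorem const_mul (c : ℝ) (hf : IsSymbolAtZero n m f) : IsSymbolAtZero n m fun x => c * f x :=
  ((const n c).mul hf).congr (zero_add m) fun _ _ => rfl

theorem exists_rpow_mul_abs_le {e : ℝ} (hf : IsSymbolAtZero n m f) (he : 0 ≤ e + m) (R : ℝ) :
    ∃ C > 0, ∀ x ∈ Ioc 0 R, x ^ e * |f x| ≤ C := by
  have hprod := ((const_mul_rpow n 1 e).mul hf).mono he
  obtain ⟨C, hC, hbound⟩ := exists_abs_le_on_Ioc_of_isBigO_one hprod.contDiffOn.continuousOn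
    (by simpa only [Real.rpow_zero] using hprod.isBigO) R
  refine ⟨C, hC, fun x hx => ?_⟩
  simpa [abs_mul, abs_of_pos (Real.rpow_pos_of_pos hx.1 e)] using hbound x hx

theorem exists_abs_le_mul_rpow (hf : IsSymbolAtZero n m f) (R : ℝ) :
    ∃ C, ∀ x ∈ Ioc 0 R, |f x| ≤ C * x ^ m := by
  obtain ⟨C, -, hC⟩ := hf.exists_rpow_mul_abs_le (neg_add_cancel m).ge R
  refine ⟨C, fun x hx => ?_⟩
  rw [← div_le_iff₀ (Real.rpow_pos_of_pos hx.1 m), div_eq_inv_mul, ← Real.rpow_neg hx.1.le]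
  exact hC x hx

theorem exists_weighted_jet_le {e : ℝ} (hf : IsSymbolAtZero 2 m f) (he : 0 ≤ e + m) (R : ℝ) :
    ∃ C > 0, ∀ x ∈ Ioc 0 R, x ^ e * |f x| + x ^ (1 + e) * |_root_.deriv f x|
      + x ^ (2 + e) * |_root_.deriv (_root_.deriv f) x| ≤ C := by
  obtain ⟨C₀, hC₀, h₀⟩ := hf.exists_rpow_mul_abs_le he R
  obtain ⟨C₁, hC₁, h₁⟩ := hf.deriv.exists_rpow_mul_abs_le (e := 1 + e) (by linarith) R
  obtain ⟨C₂, hC₂, h₂⟩ := hf.deriv.deriv.exists_rpow_mul_abs_le (e := 2 + e) (by linarith) R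
  exact ⟨C₀ + C₁ + C₂, by positivity, fun x hx => by linarith [h₀ x hx, h₁ x hx, h₂ x hx]⟩

theorem isBigO_one_add_rpow_sub_one (hf : IsSymbolAtZero n m f) (hm : 0 < m) (p : ℝ) :
    (fun x => (1 + f x) ^ p - 1) =O[𝓝[>] 0] fun x => x ^ m := by
  have hpow : Tendsto (fun x : ℝ => x ^ m) (𝓝[>] 0) (𝓝 0) := by
    simpa [Real.zero_rpow hm.ne'] using
      (Real.continuousAt_rpow_const 0 m (.inr hm.le)).tendsto.mono_left nhdsWithin_le_nhds
  have hbase : Tendsto (fun x => 1 + f x) (𝓝[>] 0) (𝓝 1) := by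
    simpa using (hf.isBigO.trans_tendsto hpow).const_add 1
  have hdiff : DifferentiableAt ℝ (fun y : ℝ => y ^ p) 1 :=
    Real.differentiableAt_rpow_const_of_ne p one_ne_zero
  refine .trans ?_ hf.isBigO
  simpa [Function.comp_def] using hdiff.isBigO_sub.comp_tendsto hbase

theorem one_add_rpow_sub_one (hf : IsSymbolAtZero n m f) (hm : 0 < m)
    (hpos : ∀ x > 0, 0 < 1 + f x) (p : ℝ) : IsSymbolAtZero n m fun x => (1 + f x) ^ p - 1 := by
  induction n generalizing p with
  | zero =>
    refine zero_iff.2 ⟨?_, hf.isBigO_one_add_rpow_sub_one hm p⟩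
    exact ((continuousOn_const.add (zero_iff.1 hf).1).rpow_const
      fun x hx => .inl (hpos x hx).ne').sub continuousOn_const
  | succ n ih =>
    refine of_hasDerivAt (fun x hx =>
      (((hf.hasDerivAt hx).const_add 1).rpow_const (.inl (hpos x hx).ne')).sub_const 1)
      (hf.isBigO_one_add_rpow_sub_one hm p) ?_
    have hfactor : IsSymbolAtZero n 0 fun x => ((1 + f x) ^ (p - 1) - 1) + 1 :=
      ((ih (hf.of_le n.le_succ) (p - 1)).mono hm.le).add (const n 1)
    exact ((hf.deriv.mul hfactor).const_mul p).congr (add_zero _) fun x _ => by ring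

theorem intervalIntegrable (hf : IsSymbolAtZero n m f) (hm : -1 < m) {R : ℝ} (hR : 0 ≤ R) :
    IntervalIntegrable f volume 0 R := by
  obtain ⟨C, hC⟩ := hf.exists_abs_le_mul_rpow R
  refine ((intervalIntegral.intervalIntegrable_rpow' hm).const_mul C).mono_fun' ?_ ?_ <;>
    rw [uIoc_of_le hR]
  · exact (hf.contDiffOn.continuousOn.mono fun x hx => hx.1).aestronglyMeasurable measurableSet_Ioc
  · filter_upwards [ae_restrict_mem measurableSet_Ioc] with x hx using hC x hx

theorem hasDerivAt_integral (hf : IsSymbolAtZero n m f) (hm : -1 < m) {x : ℝ} (hx : 0 < x) :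
    HasDerivAt (fun r => ∫ s in (0 : ℝ)..r, f s) (f x) x :=
  intervalIntegral.integral_hasDerivAt_right (hf.intervalIntegrable hm hx.le)
    (hf.contDiffOn.continuousOn.stronglyMeasurableAtFilter isOpen_Ioi x hx)
    (hf.contDiffOn.continuousOn.continuousAt (Ioi_mem_nhds hx))

theorem isBigO_integral (hf : IsSymbolAtZero n m f) (hm : -1 < m) :
    (fun r => ∫ s in (0 : ℝ)..r, f s) =O[𝓝[>] 0] fun x => x ^ (m + 1) := by
  obtain ⟨C, hC⟩ := hf.exists_abs_le_mul_rpow 1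
  refine .of_bound (C / (m + 1)) ?_
  filter_upwards [Ioo_mem_nhdsGT (zero_lt_one (α := ℝ))] with x hx
  calc ‖∫ s in (0 : ℝ)..x, f s‖
      ≤ ∫ s in (0 : ℝ)..x, C * s ^ m :=
        intervalIntegral.norm_integral_le_of_norm_le hx.1.le
          (ae_of_all _ fun s hs => hC s ⟨hs.1, hs.2.trans hx.2.le⟩)
          ((intervalIntegral.intervalIntegrable_rpow' hm).const_mul C)
    _ = C / (m + 1) * ‖x ^ (m + 1)‖ := by
        rw [intervalIntegral.integral_const_mul, integral_rpow (.inl hm),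
          Real.zero_rpow (by linarith), Real.norm_of_nonneg (Real.rpow_nonneg hx.1.le _)]
        ring

theorem integral (hf : IsSymbolAtZero n m f) (hm : -1 < m) :
    IsSymbolAtZero (n + 1) (m + 1) fun r => ∫ s in (0 : ℝ)..r, f s :=
  of_hasDerivAt (fun _ hx => hf.hasDerivAt_integral hm hx) (hf.isBigO_integral hm)
    (hf.congr (add_sub_cancel_right m 1).symm fun _ _ => rfl)

end IsSymbolAtZero

/-- `f x = c * x ^ t + O(x ^ (t + ν))` as `x → 0+`, an expansion that may be differentiated `n`
times: the remainder is a symbol of order `t + ν`. -/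
def HasLeadingPower (n : ℕ) (ν c t : ℝ) (f : ℝ → ℝ) : Prop :=
  IsSymbolAtZero n (t + ν) fun x => f x - c * x ^ t

namespace HasLeadingPower

variable {n : ℕ} {ν c d t s : ℝ} {f g : ℝ → ℝ}

theorem isSymbolAtZero (hf : HasLeadingPower n ν c t f) (hν : 0 ≤ ν) : IsSymbolAtZero n t f :=
  ((IsSymbolAtZero.mono hf (by linarith)).add (.const_mul_rpow n c t)).congr rfl
    fun x _ => by simp

theorem congr (hf : HasLeadingPower n ν c t f) (hts : t = s) (hgf : EqOn g f (Ioi 0)) :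
    HasLeadingPower n ν c s g := by
  subst hts
  exact IsSymbolAtZero.congr hf rfl fun x hx => by simp only [hgf hx]

theorem of_le {k : ℕ} (hf : HasLeadingPower n ν c t f) (hkn : k ≤ n) :
    HasLeadingPower k ν c t f :=
  IsSymbolAtZero.of_le hf hkn

theorem of_relative_error {Q : ℝ → ℝ} {δ : ℝ} (hf : ContDiffOn ℝ n f (Ioi 0)) (hc : c ≠ 0)
    (hδ : 0 < δ) (hfQ : ∀ x ∈ Ioo 0 δ, f x = c * x ^ t * (1 + Q x))
    (hQ : ∀ j ≤ n, iteratedDeriv j Q =O[𝓝[>] 0] fun x => x ^ (ν - j)) :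
    HasLeadingPower n ν c t f := by
  have hne {x : ℝ} (hx : 0 < x) : c * x ^ t ≠ 0 := mul_ne_zero hc (Real.rpow_pos_of_pos hx t).ne'
  have hrel : IsSymbolAtZero n ν fun x => f x / (c * x ^ t) - 1 := by
    refine ⟨(hf.div (IsSymbolAtZero.const_mul_rpow n c t).contDiffOn
      fun x hx => hne hx).sub contDiffOn_const, fun j hj => (hQ j hj).congr' ?_ .rfl⟩
    filter_upwards [Ioo_mem_nhdsGT hδ] with x hx
    have hEq : EqOn Q (fun x => f x / (c * x ^ t) - 1) (Ioo 0 δ) := fun y hy => by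
      simp [hfQ y hy, mul_div_cancel_left₀ _ (hne hy.1)]
    exact (hEq.eventuallyEq_of_mem (Ioo_mem_nhds hx.1 hx.2)).iteratedDeriv_eq j
  refine ((IsSymbolAtZero.const_mul_rpow n c t).mul hrel).congr rfl fun x hx => ?_
  simp only [mul_sub, mul_div_cancel₀ _ (hne hx), mul_one]

theorem rpow_const (n : ℕ) (ν t : ℝ) : HasLeadingPower n ν 1 t fun x => x ^ t :=
  (IsSymbolAtZero.const_mul_rpow n 0 (t + ν)).congr rfl fun x _ => by simp

theorem const_mul (b : ℝ) (hf : HasLeadingPower n ν c t f) :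
    HasLeadingPower n ν (b * c) t fun x => b * f x :=
  (IsSymbolAtZero.const_mul b hf).congr rfl fun x _ => by ring

theorem mul (hf : HasLeadingPower n ν c t f) (hg : HasLeadingPower n ν d s g) (hν : 0 ≤ ν) :
    HasLeadingPower n ν (c * d) (t + s) fun x => f x * g x := by
  have hleft := (IsSymbolAtZero.mul hf (hg.isSymbolAtZero hν)).congr
    (show t + ν + s = t + s + ν by ring) fun _ _ => rfl
  have hright := ((IsSymbolAtZero.const_mul_rpow n c t).mul hg).congr
    (add_assoc t s ν).symm fun _ _ => rfl
  refine (hleft.add hright).congr rfl fun x hx => ?_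
  simp only [Real.rpow_add hx]
  ring

theorem deriv (hf : HasLeadingPower (n + 1) ν c t f) :
    HasLeadingPower n ν (c * t) (t - 1) (deriv f) := by
  refine (IsSymbolAtZero.deriv hf).congr (by ring) fun x (hx : 0 < x) => ?_
  have hpow : HasDerivAt (fun y => c * y ^ t) (c * (t * x ^ (t - 1))) x :=
    (Real.hasDerivAt_rpow_const (.inl hx.ne')).const_mul c
  have hfx : HasDerivAt f (_ + _) x :=
    ((IsSymbolAtZero.hasDerivAt hf hx).add hpow).congr_of_eventuallyEq
      (.of_forall fun y => (sub_add_cancel (f y) (c * y ^ t)).symm)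
  rw [hfx.deriv]
  ring

theorem isSymbolAtZero_deriv (hf : HasLeadingPower (n + 1) ν c 0 f) :
    IsSymbolAtZero n (ν - 1) (_root_.deriv f) :=
  (IsSymbolAtZero.deriv hf).congr (by ring) fun x _ => by simp

theorem exists_weighted_jet_le (hf : HasLeadingPower 2 ν c 0 f) (hν : 0 ≤ ν) (R : ℝ) :
    ∃ C > 0, ∀ x ∈ Ioc 0 R, |f x| + x ^ (1 - ν) * |_root_.deriv f x|
      + x ^ (2 - ν) * |_root_.deriv (_root_.deriv f) x| ≤ C := by
  obtain ⟨C₀, hC₀, h₀⟩ :=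
    (hf.isSymbolAtZero hν).exists_rpow_mul_abs_le (e := 0) (add_zero 0).ge R
  obtain ⟨C₁, hC₁, h₁⟩ := IsSymbolAtZero.exists_weighted_jet_le hf (e := -ν) (by simp) R
  refine ⟨C₀ + C₁, by positivity, fun x hx => ?_⟩
  have herror : 0 ≤ x ^ (-ν) * |f x - c| := mul_nonneg (Real.rpow_nonneg hx.1.le _) (abs_nonneg _)
  have hfx := h₀ x hx
  have hjet := h₁ x hx
  simp only [Real.rpow_zero, one_mul, mul_one, deriv_sub_const_fun, ← sub_eq_add_neg] at hfx hjet
  linarith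

theorem integral (hf : HasLeadingPower n ν c (t - 1) f) (ht : 0 < t) (hν : 0 ≤ ν) :
    HasLeadingPower (n + 1) ν (c / t) t fun r => ∫ s in (0 : ℝ)..r, f s := by
  refine (IsSymbolAtZero.integral hf (by linarith)).congr (by ring) fun r (hr : 0 < r) => ?_
  have hpow : IntervalIntegrable (fun s : ℝ => c * s ^ (t - 1)) volume 0 r :=
    (intervalIntegral.intervalIntegrable_rpow' (by linarith)).const_mul c
  simp only [intervalIntegral.integral_sub
    ((hf.isSymbolAtZero hν).intervalIntegrable (by linarith) hr.le) hpow,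
    intervalIntegral.integral_const_mul]
  rw [integral_rpow (.inl (by linarith)), sub_add_cancel, Real.zero_rpow ht.ne']
  ring

theorem rpow (hf : HasLeadingPower n ν c t f) (hν : 0 < ν) (hc : 0 < c)
    (hpos : ∀ x > 0, 0 < f x) (p : ℝ) :
    HasLeadingPower n ν (c ^ p) (t * p) fun x => f x ^ p := by
  set relErr : ℝ → ℝ := fun x => c⁻¹ * x ^ (-t) * (f x - c * x ^ t) with hrelErr
  have hsymbol : IsSymbolAtZero n ν relErr :=
    ((IsSymbolAtZero.const_mul_rpow n c⁻¹ (-t)).mul hf).congr (by ring) fun _ _ => rfl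
  have hfac {x : ℝ} (hx : 0 < x) : f x = c * x ^ t * (1 + relErr x) := by
    have := (Real.rpow_pos_of_pos hx t).ne'
    simp only [hrelErr, Real.rpow_neg hx.le]
    field_simp
    ring
  have hrelPos (x : ℝ) (hx : 0 < x) : 0 < 1 + relErr x :=
    pos_of_mul_pos_right (hfac hx ▸ hpos x hx) (mul_pos hc (Real.rpow_pos_of_pos hx t)).le
  refine ((IsSymbolAtZero.const_mul_rpow n (c ^ p) (t * p)).mul
    (hsymbol.one_add_rpow_sub_one hν hrelPos p)).congr rfl fun x (hx : 0 < x) => ?_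
  have hxt := Real.rpow_nonneg hx.le t
  simp only [hfac hx, Real.mul_rpow (mul_nonneg hc.le hxt) (hrelPos x hx).le,
    Real.mul_rpow hc.le hxt, ← Real.rpow_mul hx.le]
  ring

theorem sqrt_div_id (hf : HasLeadingPower n ν c t f) (hν : 0 < ν) (hc : 0 < c)
    (hpos : ∀ x > 0, 0 < f x) :
    HasLeadingPower n ν (√c) (t / 2 - 1) fun x => √(f x) / x := by
  have hprod := (hf.rpow hν hc hpos (1 / 2)).mul (rpow_const n ν (-1)) hν.le
  rw [mul_one, ← Real.sqrt_eq_rpow] at hprod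
  refine hprod.congr (by ring) fun x _ => ?_
  simp only [Real.sqrt_eq_rpow, Real.rpow_neg_one, div_eq_mul_inv]

theorem rpow_mul_deriv_rpow (hf : HasLeadingPower (n + 1) ν c t f) (hν : 0 < ν) (hc : 0 < c)
    (ht : 0 < t) (hpos : ∀ x > 0, 0 < f x) (hderivPos : ∀ x > 0, 0 < _root_.deriv f x)
    (p q : ℝ) :
    HasLeadingPower n ν (c ^ p * (c * t) ^ q) (t * p + (t - 1) * q)
      fun x => f x ^ p * _root_.deriv f x ^ q :=
  ((hf.of_le n.le_succ).rpow hν hc hpos p).mul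
    (hf.deriv.rpow hν (mul_pos hc ht) hderivPos q) hν.le

end HasLeadingPower

/-- The function `k(ρ) = ∫₀^ρ √(P'(y)) / y dy` of the gas with pressure `P`, the primitive of
(sound speed)/(density); it bounds the support of the entropy kernel. -/
noncomputable def soundSpeedPrimitive (P : ℝ → ℝ) (ρ : ℝ) : ℝ :=
  ∫ y in (0 : ℝ)..ρ, √(deriv P y) / y

/-- The leading coefficient `a₁` in the expansion of the entropy kernel, for arbitrary
normalisation `M`. -/
noncomputable def firstCoefficient (M lam : ℝ) (k : ℝ → ℝ) (ρ : ℝ) : ℝ :=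
  M * k ρ ^ (-lam) * deriv k ρ ^ (-(1 : ℝ) / 2)

/-- The integrand in the definition of the second coefficient `a₂`. -/
noncomputable def secondCoefficientIntegrand (lam : ℝ) (k a : ℝ → ℝ) (s : ℝ) : ℝ :=
  k s ^ lam * deriv k s ^ (-(1 : ℝ) / 2) * deriv (deriv a) s

/-- The second coefficient `a₂` in the expansion of the entropy kernel with leading coefficient
`a`. -/
noncomputable def secondCoefficient (lam : ℝ) (k a : ℝ → ℝ) (ρ : ℝ) : ℝ :=
  -(4 * (lam + 1))⁻¹ * k ρ ^ (-lam - 1) * deriv k ρ ^ (-(1 : ℝ) / 2) *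
    ∫ s in (0 : ℝ)..ρ, secondCoefficientIntegrand lam k a s

section Coefficients

variable {n : ℕ} {m ν c θ lam : ℝ} {P k a : ℝ → ℝ}

theorem deriv_soundSpeedPrimitive
    (hP : IsSymbolAtZero n m fun y => √(deriv P y) / y) (hm : -1 < m) {ρ : ℝ} (hρ : 0 < ρ) :
    deriv (soundSpeedPrimitive P) ρ = √(deriv P ρ) / ρ :=
  (hP.hasDerivAt_integral hm hρ).deriv

theorem soundSpeedPrimitive_pos
    (hP : IsSymbolAtZero n m fun y => √(deriv P y) / y) (hm : -1 < m)
    (hP' : ∀ ρ > 0, 0 < deriv P ρ) {ρ : ℝ} (hρ : 0 < ρ) : 0 < soundSpeedPrimitive P ρ :=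
  intervalIntegral.intervalIntegral_pos_of_pos_on (hP.intervalIntegrable hm hρ.le)
    (fun y hy => div_pos (Real.sqrt_pos.2 (hP' y hy.1)) hy.1) hρ

theorem hasLeadingPower_firstCoefficient (M : ℝ) (hk : HasLeadingPower (n + 1) ν c θ k)
    (hν : 0 < ν) (hc : 0 < c) (hθ : 0 < θ) (hkpos : ∀ ρ > 0, 0 < k ρ)
    (hk'pos : ∀ ρ > 0, 0 < deriv k ρ) (hlam : 2 * θ * lam = 1 - θ) :
    HasLeadingPower n ν (M * (c ^ (-lam) * (c * θ) ^ (-(1 : ℝ) / 2))) 0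
      (firstCoefficient M lam k) :=
  ((hk.rpow_mul_deriv_rpow hν hc hθ hkpos hk'pos (-lam) (-(1 : ℝ) / 2)).const_mul M).congr
    (by linear_combination -hlam / 2) fun _ _ => mul_assoc _ _ _

theorem isSymbolAtZero_secondCoefficientIntegrand {A : ℝ}
    (hk : HasLeadingPower (n + 1) ν c θ k) (ha : HasLeadingPower (n + 2) ν A 0 a)
    (hν : 0 < ν) (hc : 0 < c) (hθ : 0 < θ) (hkpos : ∀ ρ > 0, 0 < k ρ)
    (hk'pos : ∀ ρ > 0, 0 < deriv k ρ) (hlam : 2 * θ * lam = 1 - θ) :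
    IsSymbolAtZero n (ν - θ - 1) (secondCoefficientIntegrand lam k a) := by
  have hweight := (hk.rpow_mul_deriv_rpow hν hc hθ hkpos hk'pos lam
    (-(1 : ℝ) / 2)).isSymbolAtZero hν.le
  exact (hweight.mul ha.isSymbolAtZero_deriv.deriv).congr (by linear_combination hlam / 2)
    fun _ _ => rfl

theorem isSymbolAtZero_secondCoefficient {A : ℝ}
    (hk : HasLeadingPower (n + 2) ν c θ k) (ha : HasLeadingPower (n + 2) ν A 0 a)
    (hν : θ < ν) (hc : 0 < c) (hθ : 0 < θ) (hkpos : ∀ ρ > 0, 0 < k ρ)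
    (hk'pos : ∀ ρ > 0, 0 < deriv k ρ) (hlam : 2 * θ * lam = 1 - θ) :
    IsSymbolAtZero (n + 1) (ν - 2 * θ) (secondCoefficient lam k a) := by
  have hν₀ : 0 < ν := hθ.trans hν
  have hprefactor := (hk.rpow_mul_deriv_rpow hν₀ hc hθ hkpos hk'pos (-lam - 1)
    (-(1 : ℝ) / 2)).isSymbolAtZero hν₀.le
  have hintegral := (isSymbolAtZero_secondCoefficientIntegrand (hk.of_le (n + 1).le_succ) ha
    hν₀ hc hθ hkpos hk'pos hlam).integral (by linarith)
  refine ((hprefactor.mul hintegral).const_mul (-(4 * (lam + 1))⁻¹)).congr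
    (by linear_combination -hlam / 2) fun ρ _ => ?_
  simp only [secondCoefficient]
  ring

end Coefficients

theorem entropy_kernel_coefficients_bounded_density_general
    {P Q : ℝ → ℝ} {δ γ κ B ν θ M lam : ℝ} {k a₁ a₂ : ℝ → ℝ}
    (hPC4 : ContDiffOn ℝ 4 P (Ioi 0)) (hP' : ∀ ρ > 0, 0 < deriv P ρ)
    (hδ : 0 < δ) (hγ : 1 < γ) (hκ : 0 < κ)
    (hPQ : ∀ ρ ∈ Ioo 0 δ, P ρ = κ * ρ ^ γ * (1 + Q ρ))
    (hQ : ∀ ρ ∈ Ioo 0 δ, ∀ j : ℕ, j ≤ 4 → |iteratedDeriv j Q ρ| ≤ B * ρ ^ (ν - j))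
    (hθ : θ = (γ - 1) / 2) (hν : θ < ν) (hlam : lam = (3 - γ) / (2 * (γ - 1)))
    (hk : ∀ ρ, k ρ = ∫ y in (0 : ℝ)..ρ, √(deriv P y) / y)
    (ha₁ : ∀ ρ, a₁ ρ = M * k ρ ^ (-lam) * deriv k ρ ^ (-(1 : ℝ) / 2))
    (ha₂ : ∀ ρ, a₂ ρ = -(4 * (lam + 1))⁻¹ * k ρ ^ (-lam - 1) * deriv k ρ ^ (-(1 : ℝ) / 2) *
      ∫ s in (0 : ℝ)..ρ, k s ^ lam * deriv k s ^ (-(1 : ℝ) / 2) * deriv (deriv a₁) s) :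
    (∀ ρ, 0 < ρ → IntervalIntegrable
      (fun s => k s ^ lam * deriv k s ^ (-(1 : ℝ) / 2) * deriv (deriv a₁) s) volume 0 ρ) ∧
    ∀ R, ∃ C, 0 < C ∧ ∀ ρ ∈ Ioc 0 R,
      |a₁ ρ| + ρ ^ (1 - ν) * |deriv a₁ ρ| + ρ ^ (2 - ν) * |deriv (deriv a₁) ρ|
        + ρ ^ (2 * θ - ν) * |a₂ ρ| + ρ ^ (1 + (2 * θ - ν)) * |deriv a₂ ρ|
        + ρ ^ (2 + (2 * θ - ν)) * |deriv (deriv a₂) ρ| ≤ C := by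
  have hθ₀ : 0 < θ := by linarith
  have hν₀ : 0 < ν := hθ₀.trans hν
  have hlamθ : 2 * θ * lam = 1 - θ := by
    have := (sub_pos.2 hγ).ne'
    rw [hlam, hθ]
    field_simp
    ring
  obtain rfl : k = soundSpeedPrimitive P := funext hk
  obtain rfl : a₁ = firstCoefficient M lam (soundSpeedPrimitive P) := funext ha₁
  obtain rfl : a₂ = secondCoefficient lam _ (firstCoefficient M lam _) := funext ha₂
  have hP : HasLeadingPower 4 ν κ γ P :=
    .of_relative_error (by exact_mod_cast hPC4) hκ.ne' hδ hPQ fun j hj => by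
      refine .of_bound B ?_
      filter_upwards [Ioo_mem_nhdsGT hδ] with ρ hρ
      simpa [abs_of_pos (Real.rpow_pos_of_pos hρ.1 _)] using hQ ρ hρ j hj
  have hsound : HasLeadingPower 3 ν (√(κ * γ)) (θ - 1) fun y => √(deriv P y) / y :=
    (hP.deriv.sqrt_div_id hν₀ (by positivity) hP').congr (by rw [hθ]) fun _ _ => rfl
  have hsymbol := hsound.isSymbolAtZero hν₀.le
  have hkpos (ρ : ℝ) (hρ : 0 < ρ) : 0 < soundSpeedPrimitive P ρ :=
    soundSpeedPrimitive_pos hsymbol (by linarith) hP' hρ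
  have hk'pos (ρ : ℝ) (hρ : 0 < ρ) : 0 < deriv (soundSpeedPrimitive P) ρ := by
    rw [deriv_soundSpeedPrimitive hsymbol (by linarith) hρ]
    exact div_pos (Real.sqrt_pos.2 (hP' ρ hρ)) hρ
  have hkPower : HasLeadingPower 4 ν (√(κ * γ) / θ) θ (soundSpeedPrimitive P) :=
    hsound.integral hθ₀ hν₀.le
  have hc : 0 < √(κ * γ) / θ := by positivity
  have ha₁Power := hasLeadingPower_firstCoefficient M hkPower hν₀ hc hθ₀ hkpos hk'pos hlamθ
  have hintegrand := isSymbolAtZero_secondCoefficientIntegrand (hkPower.of_le (by simp)) ha₁Power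
    hν₀ hc hθ₀ hkpos hk'pos hlamθ
  have ha₂Symbol := isSymbolAtZero_secondCoefficient (hkPower.of_le (by simp)) ha₁Power
    hν hc hθ₀ hkpos hk'pos hlamθ
  refine ⟨fun ρ hρ => hintegrand.intervalIntegrable (by linarith) hρ.le, fun R => ?_⟩
  obtain ⟨C₁, hC₁, h₁⟩ := (ha₁Power.of_le (k := 2) (by simp)).exists_weighted_jet_le hν₀.le R
  obtain ⟨C₂, hC₂, h₂⟩ := ha₂Symbol.exists_weighted_jet_le (e := 2 * θ - ν) (by simp) R
  exact ⟨C₁ + C₂, by positivity, fun ρ hρ => by linarith [h₁ ρ hρ, h₂ ρ hρ]⟩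

end EntropyKernelCoefficients

theorem entropy_kernel_coefficients_bounded_density
    (P Q₁ Q₂ : ℝ → ℝ) (ρstar ρss γ₁ γ₂ κ₁ κ₂ Cs Css εe : ℝ)
    (hPC1 : ContDiffOn ℝ 1 P (Ici 0))
    (hPC4 : ContDiffOn ℝ 4 P (Ioi 0))
    (hH1 : ∀ ρ : ℝ, 0 < ρ → 0 < deriv P ρ ∧ 0 < 2 * deriv P ρ + ρ * deriv (deriv P) ρ)
    (hρstar : 0 < ρstar) (hγ₁ : 1 < γ₁) (hγ₁3 : γ₁ < 3) (hκ₁ : 0 < κ₁) (hCs : 0 < Cs)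
    (hQ₁C4 : ContDiffOn ℝ 4 Q₁ (Ioi 0))
    (hPsmall : ∀ ρ ∈ Ico (0:ℝ) ρstar, P ρ = κ₁ * ρ ^ γ₁ * (1 + Q₁ ρ))
    (hQ₁bd : ∀ ρ ∈ Ioo (0:ℝ) ρstar, ∀ j : ℕ, j ≤ 4 →
      |iteratedDeriv j Q₁ ρ| ≤ Cs * ρ ^ (γ₁ - 1 - (j : ℝ)))
    (hρss : ρstar < ρss) (hγ₂ : 6/5 < γ₂) (hγ₂1 : γ₂ ≤ γ₁) (hκ₂ : 0 < κ₂)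
    (hεe : 0 < εe) (hCss : 0 < Css)
    (hQ₂C4 : ContDiffOn ℝ 4 Q₂ (Ioi 0))
    (hPlarge : ∀ ρ : ℝ, ρss ≤ ρ → P ρ = κ₂ * ρ ^ γ₂ * (1 + Q₂ ρ))
    (hQ₂bd : ∀ ρ : ℝ, ρss ≤ ρ → ∀ j : ℕ, j ≤ 4 →
      |iteratedDeriv j Q₂ ρ| ≤ Css * ρ ^ (-εe - (j : ℝ)))
    (lam₁ Mlam θ₁ θ₂ : ℝ)
    (hlam₁ : lam₁ = (3 - γ₁) / (2 * (γ₁ - 1)))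
    (hMlam : Mlam = (2 * lam₁ / Real.sqrt (2 * lam₁ + 1) * ∫ z in (-1:ℝ)..1, (1 - z ^ 2) ^ lam₁)⁻¹)
    (hθ₁ : θ₁ = (γ₁ - 1) / 2) (hθ₂ : θ₂ = (γ₂ - 1) / 2)
    (k a₁ a₂ : ℝ → ℝ)
    (hk : ∀ ρ : ℝ, k ρ = ∫ y in (0:ℝ)..ρ, Real.sqrt (deriv P y) / y)
    (ha₁ : ∀ ρ : ℝ, a₁ ρ = Mlam * k ρ ^ (-lam₁) * deriv k ρ ^ (-(1:ℝ)/2))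
    (ha₂ : ∀ ρ : ℝ, a₂ ρ = -(4 * (lam₁ + 1))⁻¹ * k ρ ^ (-lam₁ - 1) * deriv k ρ ^ (-(1:ℝ)/2) *
      ∫ s in (0:ℝ)..ρ, k s ^ lam₁ * deriv k s ^ (-(1:ℝ)/2) * deriv (deriv a₁) s) :
    (∀ ρ : ℝ, 0 < ρ → IntervalIntegrable
      (fun s => k s ^ lam₁ * deriv k s ^ (-(1:ℝ)/2) * deriv (deriv a₁) s) volume 0 ρ) ∧
    ∀ ρmax : ℝ, 0 < ρmax → ∃ C : ℝ, 0 < C ∧ ∀ ρ ∈ Ioc (0:ℝ) ρmax,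
      |a₁ ρ| + ρ ^ (1 - 2 * θ₁) * |deriv a₁ ρ| + ρ ^ (2 - 2 * θ₁) * |deriv (deriv a₁) ρ|
        + |a₂ ρ| + ρ * |deriv a₂ ρ| + ρ ^ 2 * |deriv (deriv a₂) ρ| ≤ C := by
  obtain ⟨hint, hbound⟩ := entropy_kernel_coefficients_bounded_density_general hPC4
    (fun ρ hρ => (hH1 ρ hρ).1) hρstar hγ₁ hκ₁ (fun ρ hρ => hPsmall ρ (Ioo_subset_Ico_self hρ))
    hQ₁bd hθ₁ (by linarith) hlam₁ hk ha₁ ha₂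
  exact ⟨hint, fun R _ => by
    simpa [show γ₁ - 1 = 2 * θ₁ by linarith] using hbound R⟩
end

section
/- Under the hypotheses (H1)–(H3) on the pressure P, with k(ρ) = ∫₀^ρ √(P'(y))/y dy, λ₁ = (3−γ₁)/(2(γ₁−1)), M_{λ₁} = (2λ₁ (2λ₁+1)^{−1/2} ∫_{−1}^{1} (1−z²)^{λ₁} dz)^{−1}, a₁(ρ) = M_{λ₁} k(ρ)^{−λ₁} k'(ρ)^{−1/2}, b₁(ρ) = M_{λ₁} ρ k(ρ)^{−λ₁−1} k'(ρ)^{1/2}, and b₂(ρ) = −(4(λ₁+1))^{−1} ρ k'(ρ)^{1/2} k(ρ)^{−(λ₁+2)} ∫₀^ρ k(s)^{λ₁} k'(s)^{−1/2} a₁''(s) ds − (4(λ₁+1))^{−1} k(ρ)^{−(λ₁+2)} k'(ρ)^{−1/2} ∫₀^ρ k(s)^{λ₁+1} k'(s)^{−1/2} b₁''(s) ds + (4(λ₁+1))^{−1} k(ρ)^{−(λ₁+2)} k'(ρ)^{−1/2} ∫₀^ρ s k(s)^{λ₁} k'(s)^{1/2} a₁''(s) ds (all three integrals converge), the following holds: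 b₁(ρ) > 0 for every ρ > 0, and there exist a constant C > 0 and a threshold ρ̄ ≥ ρ^* such that, with θ₁ = (γ₁−1)/2 and θ₂ = (γ₂−1)/2, for all ρ ≥ ρ̄: |b₁(ρ)| + ρ|b₁'(ρ)| + ρ²|b₁''(ρ)| ≤ C ρ^{1/2 − θ₂/(2θ₁)} and |b₂(ρ)| + ρ|b₂'(ρ)| + ρ²|b₂''(ρ)| ≤ C ρ^{1/2 − θ₂(1 + 1/(2θ₁))}. -/
open Set MeasureTheory Filter
open scoped Topology
open Asymptotics

/-!
All estimates are power counting for symbols, i.e. functions with `f⁽ʲ⁾ = O(ρ ^ (α - j))`. Powers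
and derivatives of the primitive `k ~ ρ ^ θ` occur with negative exponents, so `k` and `k'` must
also be bounded below; for this one controls the Euler remainder `ρ k' - θ k`, which is smaller than
`ρ ^ θ` by a factor `ρ ^ β` tending to zero. This property passes to products, powers, derivatives
and primitives, hence from the pressure law to all kernel coefficients, both at vacuum and at
infinity.

At vacuum the exponent of `a₁` and `b₁` vanishes, and plain power counting gives second derivatives
of size `ρ ^ (-2)`, too singular for the integrals in `b₂`. But then the remainder is `ρ a₁'` (resp.
`ρ b₁'`) itself, so the second derivatives improve by `ρ ^ β`, and the integrals converge because
`β > θ₁`.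
-/

/-- An end of the half-line `(0, ∞)`: a filter generated by open sets of positive reals. It stands
for `0⁺` or `+∞`, so that small and large densities can be treated by the same calculus. -/
class IsOpenEnd (l : Filter ℝ) : Prop where
  eventually_pos : ∀ᶠ x in l, 0 < x
  eventually_nhds : ∀ {p : ℝ → Prop}, (∀ᶠ x in l, p x) → ∀ᶠ x in l, ∀ᶠ y in 𝓝 x, p y

instance : IsOpenEnd (𝓝[>] 0) where
  eventually_pos := eventually_mem_nhdsWithin
  eventually_nhds h := by
    filter_upwards [eventually_eventually_nhdsWithin.2 h, self_mem_nhdsWithin] with x hx hx0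
    rwa [isOpen_Ioi.nhdsWithin_eq hx0] at hx

instance : IsOpenEnd atTop where
  eventually_pos := eventually_gt_atTop 0
  eventually_nhds h := by
    obtain ⟨a, ha⟩ := eventually_atTop.1 h
    filter_upwards [eventually_gt_atTop a] with x hx
    filter_upwards [eventually_gt_nhds hx] with y hy using ha y hy.le

/-- Symbols of order `α` at the end `l`: functions with `f⁽ʲ⁾(x) = O(x ^ (α - j))` for all
`j ≤ n`. -/
def IsSymbol (l : Filter ℝ) : ℕ → ℝ → (ℝ → ℝ) → Prop
  | 0, α, f => f =O[l] (· ^ α)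
  | n + 1, α, f =>
    f =O[l] (· ^ α) ∧ (∀ᶠ x in l, DifferentiableAt ℝ f x) ∧ IsSymbol l n (α - 1) (deriv f)

section Symbol

variable {l : Filter ℝ} {n : ℕ} {α β γ : ℝ} {f g : ℝ → ℝ}

namespace IsSymbol

theorem isBigO (h : IsSymbol l n α f) : f =O[l] (· ^ α) := by
  cases n with
  | zero => exact h
  | succ n => exact h.1

theorem of_succ (h : IsSymbol l (n + 1) α f) : IsSymbol l n α f := by
  induction n generalizing α f with
  | zero => exact h.1
  | succ n ih => exact ⟨h.1, h.2.1, ih h.2.2⟩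

theorem zero : IsSymbol l n α (fun _ => 0) := by
  induction n generalizing α with
  | zero => exact isBigO_zero _ _
  | succ n ih => exact ⟨isBigO_zero _ _, by simp, by simpa only [deriv_const'] using ih⟩

theorem const (c : ℝ) : IsSymbol l n 0 (fun _ => c) := by
  have hc : (fun _ : ℝ => c) =O[l] (· ^ (0 : ℝ)) := by
    simpa only [Real.rpow_zero] using isBigO_const_const c one_ne_zero l
  cases n with
  | zero => exact hc
  | succ n => exact ⟨hc, by simp, by simpa only [deriv_const'] using zero⟩

theorem of_iteratedDeriv (hf : ∀ᶠ x in l, ContDiffAt ℝ n f x)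
    (hb : ∀ j ≤ n, iteratedDeriv j f =O[l] (fun x : ℝ => x ^ (α - j))) : IsSymbol l n α f := by
  have hb₀ : f =O[l] (fun x : ℝ => x ^ α) := by simpa using hb 0 n.zero_le
  induction n generalizing α f with
  | zero => exact hb₀
  | succ n ih =>
    have hb' : ∀ j ≤ n, iteratedDeriv j (deriv f) =O[l] (fun x : ℝ => x ^ (α - 1 - j)) := by
      intro j hj
      have h := hb (j + 1) (by lia)
      rw [iteratedDeriv_succ'] at h
      convert h using 3
      push_cast
      ring
    exact ⟨hb₀, hf.mono fun x hx => hx.differentiableAt (by simp),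
      ih (hf.mono fun x hx => (hx.fderiv_right_succ).clm_apply contDiffAt_const) hb'
        (by simpa using hb' 0 n.zero_le)⟩

end IsSymbol

variable [IsOpenEnd l]

theorem rpow_mul_rpow_eventuallyEq (h : α + β = γ) :
    (fun x : ℝ => x ^ α * x ^ β) =ᶠ[l] (· ^ γ) := by
  filter_upwards [IsOpenEnd.eventually_pos] with x hx
  rw [← Real.rpow_add hx, h]

theorem isBigO_mul_rpow (hf : f =O[l] (· ^ α)) (hg : g =O[l] (· ^ β)) (h : α + β = γ) :
    (fun x => f x * g x) =O[l] (· ^ γ) :=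
  (hf.mul hg).trans_eventuallyEq (rpow_mul_rpow_eventuallyEq h)

theorem deriv_eventuallyEq (h : f =ᶠ[l] g) : deriv f =ᶠ[l] deriv g :=
  (IsOpenEnd.eventually_nhds h).mono fun _ hx => EventuallyEq.deriv_eq hx

namespace IsSymbol

theorem congr (h : IsSymbol l n α f) (hfg : f =ᶠ[l] g) : IsSymbol l n α g := by
  induction n generalizing α f g with
  | zero => exact hfg.symm.trans_isBigO h
  | succ n ih =>
    refine ⟨hfg.symm.trans_isBigO h.1, ?_, ih h.2.2 (deriv_eventuallyEq hfg)⟩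
    filter_upwards [h.2.1, IsOpenEnd.eventually_nhds hfg] with x hx hfgx
    exact hx.congr_of_eventuallyEq (EventuallyEq.symm hfgx)

theorem mono_order (h : IsSymbol l n α f)
    (hαβ : (fun x : ℝ => x ^ α) =O[l] (fun x : ℝ => x ^ β)) : IsSymbol l n β f := by
  induction n generalizing α β f with
  | zero => exact IsBigO.trans h hαβ
  | succ n ih =>
    refine ⟨h.1.trans hαβ, h.2.1, ih h.2.2 ?_⟩
    exact (rpow_mul_rpow_eventuallyEq (sub_eq_add_neg α 1).symm).symm.trans_isBigO
      (isBigO_mul_rpow hαβ (isBigO_refl _ l) (sub_eq_add_neg β 1).symm)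

theorem add (hf : IsSymbol l n α f) (hg : IsSymbol l n α g) :
    IsSymbol l n α (fun x => f x + g x) := by
  induction n generalizing α f g with
  | zero => exact IsBigO.add hf hg
  | succ n ih =>
    refine ⟨hf.1.add hg.1, hf.2.1.and hg.2.1 |>.mono fun _ h => h.1.add h.2,
      (ih hf.2.2 hg.2.2).congr ?_⟩
    filter_upwards [hf.2.1, hg.2.1] with x hfx hgx using (deriv_fun_add hfx hgx).symm

theorem mul (hf : IsSymbol l n α f) (hg : IsSymbol l n β g) (h : α + β = γ) :
    IsSymbol l n γ (fun x => f x * g x) := by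
  induction n generalizing α β γ f g with
  | zero => exact isBigO_mul_rpow hf hg h
  | succ n ih =>
    refine ⟨isBigO_mul_rpow hf.1 hg.1 h, hf.2.1.and hg.2.1 |>.mono fun _ h => h.1.mul h.2, ?_⟩
    have hfg' : IsSymbol l n (γ - 1) (fun x => deriv f x * g x + f x * deriv g x) :=
      (ih hf.2.2 hg.of_succ (by linarith)).add (ih hf.of_succ hg.2.2 (by linarith))
    refine hfg'.congr ?_
    filter_upwards [hf.2.1, hg.2.1] with x hfx hgx using (deriv_fun_mul hfx hgx).symm

theorem const_mul (c : ℝ) (hf : IsSymbol l n α f) : IsSymbol l n α (fun x => c * f x) :=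
  (const c).mul hf (zero_add α)

theorem rpow (α : ℝ) : IsSymbol l n α (fun x => x ^ α) := by
  induction n generalizing α with
  | zero => exact isBigO_refl _ l
  | succ n ih =>
    have hd : ∀ᶠ x : ℝ in l, HasDerivAt (fun x : ℝ => x ^ α) (α * x ^ (α - 1)) x :=
      IsOpenEnd.eventually_pos.mono fun x hx => Real.hasDerivAt_rpow_const (Or.inl hx.ne')
    exact ⟨isBigO_refl _ l, hd.mono fun _ h => h.differentiableAt,
      ((ih (α - 1)).const_mul α).congr (hd.mono fun _ h => h.deriv.symm)⟩

protected theorem id : IsSymbol l n 1 (fun x => x) := by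
  simpa only [Real.rpow_one] using rpow (l := l) (n := n) 1

theorem of_id_mul (h : IsSymbol l n α (fun x => x * f x)) : IsSymbol l n (α - 1) f := by
  refine ((rpow (-1)).mul h (neg_add_eq_sub 1 α)).congr ?_
  filter_upwards [IsOpenEnd.eventually_pos] with x hx
  rw [Real.rpow_neg_one, inv_mul_cancel_left₀ hx.ne']

theorem exists_forall_abs_add_le (h : IsSymbol l 2 α f) :
    ∃ C, 0 < C ∧ ∀ᶠ x in l,
      |f x| + x * |deriv f x| + x ^ 2 * |deriv (deriv f) x| ≤ C * x ^ α := by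
  have h₁ : (fun x => x * deriv f x) =O[l] (· ^ α) :=
    (IsSymbol.id.mul h.2.2 (add_sub_cancel 1 α)).isBigO
  have h₂ : (fun x => x * (x * deriv (deriv f) x)) =O[l] (· ^ α) :=
    (IsSymbol.id.mul (IsSymbol.id.mul h.2.2.2.2 (add_sub_cancel 1 _)) (add_sub_cancel 1 α)).isBigO
  obtain ⟨C, hC, hbound⟩ := ((h.isBigO.norm_left.add h₁.norm_left).add h₂.norm_left).exists_pos
  refine ⟨C, hC, ?_⟩
  filter_upwards [hbound.bound, IsOpenEnd.eventually_pos] with x hx hx₀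
  simp only [norm_mul, Real.norm_of_nonneg hx₀.le, Real.norm_of_nonneg (Real.rpow_nonneg hx₀.le α),
    Real.norm_eq_abs, ← mul_assoc, ← sq, abs_sq] at hx
  exact (le_abs_self _).trans hx

theorem exists_forall_ge_abs_add_le (hf : IsSymbol atTop 2 α f)
    (hg : IsSymbol atTop 2 β g) (r : ℝ) :
    ∃ C, 0 < C ∧ ∃ R, r ≤ R ∧ ∀ x, R ≤ x →
      |f x| + x * |deriv f x| + x ^ 2 * |deriv (deriv f) x| ≤ C * x ^ α ∧
        |g x| + x * |deriv g x| + x ^ 2 * |deriv (deriv g) x| ≤ C * x ^ β := by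
  obtain ⟨A, hA, hfA⟩ := hf.exists_forall_abs_add_le
  obtain ⟨B, -, hgB⟩ := hg.exists_forall_abs_add_le
  obtain ⟨R, hR⟩ := eventually_atTop.1 ((hfA.and hgB).and (eventually_ge_atTop 0))
  refine ⟨max A B, lt_max_of_lt_left hA, max r R, le_max_left r R, fun x hx => ?_⟩
  obtain ⟨⟨hfx, hgx⟩, hx₀⟩ := hR x ((le_max_right r R).trans hx)
  exact ⟨hfx.trans (mul_le_mul_of_nonneg_right (le_max_left A B) (Real.rpow_nonneg hx₀ α)),
    hgx.trans (mul_le_mul_of_nonneg_right (le_max_right A B) (Real.rpow_nonneg hx₀ β))⟩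

end IsSymbol

end Symbol

section Integration

variable {n : ℕ} {α : ℝ} {f : ℝ → ℝ}

theorem abs_sub_le_of_abs_deriv_le_rpow {a x C : ℝ} (ha : 0 < a) (hax : a ≤ x) (hα : α ≠ 0)
    (hf : ∀ y ∈ Icc a x, DifferentiableAt ℝ f y)
    (hC : ∀ y ∈ Icc a x, |deriv f y| ≤ C * y ^ (α - 1)) :
    |f x - f a| ≤ C / α * (x ^ α - a ^ α) := by
  have hB : ∀ y ∈ Icc a x,
      HasDerivAt (fun y => C / α * (y ^ α - a ^ α)) (C * y ^ (α - 1)) y := by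
    intro y hy
    have h := ((Real.hasDerivAt_rpow_const (p := α)
      (Or.inl (ha.trans_le hy.1).ne')).sub_const (a ^ α)).const_mul (C / α)
    exact h.congr_deriv (by field_simp)
  exact image_norm_le_of_norm_deriv_right_le_deriv_boundary' (f := fun y => f y - f a)
    (f' := deriv f) (B := fun y => C / α * (y ^ α - a ^ α))
    (fun y hy => ((hf y hy).continuousAt.sub continuousAt_const).continuousWithinAt)
    (fun y hy => ((hf y (Ico_subset_Icc_self hy)).hasDerivAt.sub_const _).hasDerivWithinAt)
    (by simp) (fun y hy => (hB y hy).continuousAt.continuousWithinAt)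
    (fun y hy => (hB y (Ico_subset_Icc_self hy)).hasDerivWithinAt)
    (fun y hy => hC y (Ico_subset_Icc_self hy)) (right_mem_Icc.2 hax)

theorem tendsto_rpow_nhdsGT_zero (hα : 0 < α) :
    Tendsto (fun x : ℝ => x ^ α) (𝓝[>] 0) (𝓝 0) := by
  simpa only [Real.zero_rpow hα.ne'] using
    (Real.continuousAt_rpow_const 0 α (Or.inr hα.le)).tendsto.mono_left nhdsWithin_le_nhds

theorem isBigO_rpow_of_deriv_nhdsGT (hα : 0 < α)
    (hf : ∀ᶠ x in 𝓝[>] 0, DifferentiableAt ℝ f x)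
    (hf₀ : Tendsto f (𝓝[>] 0) (𝓝 0)) (hf' : deriv f =O[𝓝[>] 0] (· ^ (α - 1))) :
    f =O[𝓝[>] 0] (· ^ α) := by
  obtain ⟨C, hC⟩ := hf'.bound
  obtain ⟨r, hr, hrf⟩ := mem_nhdsGT_iff_exists_Ioo_subset.1 (hf.and hC)
  have hr0 : (0 : ℝ) < r := hr
  refine IsBigO.of_bound (C / α) ?_
  filter_upwards [Ioo_mem_nhdsGT hr0] with x hx
  have hlim : Tendsto (fun a => C / α * (x ^ α - a ^ α)) (𝓝[>] 0) (𝓝 (C / α * x ^ α)) := by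
    simpa using ((tendsto_rpow_nhdsGT_zero hα).const_sub (x ^ α)).const_mul (C / α)
  have hle : ∀ᶠ a in 𝓝[>] 0, |f x - f a| ≤ C / α * (x ^ α - a ^ α) := by
    filter_upwards [Ioo_mem_nhdsGT hx.1] with a ha
    have hIcc : Icc a x ⊆ Ioo 0 r := fun y hy => ⟨ha.1.trans_le hy.1, hy.2.trans_lt hx.2⟩
    refine abs_sub_le_of_abs_deriv_le_rpow ha.1 ha.2.le hα.ne'
      (fun y hy => (hrf (hIcc hy)).1) fun y hy => ?_
    simpa only [Real.norm_eq_abs, abs_of_pos (Real.rpow_pos_of_pos (hIcc hy).1 _)]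
      using (hrf (hIcc hy)).2
  have h := le_of_tendsto_of_tendsto (hf₀.const_sub (f x)).abs hlim hle
  rwa [sub_zero, ← abs_of_pos (Real.rpow_pos_of_pos hx.1 α)] at h

theorem isBigO_rpow_rpow_atTop {β : ℝ} (h : α ≤ β) :
    (fun x : ℝ => x ^ α) =O[atTop] (fun x : ℝ => x ^ β) := by
  refine IsBigO.of_bound 1 ?_
  filter_upwards [eventually_ge_atTop 1] with x hx
  have : 0 < x := by linarith
  rw [one_mul, Real.norm_of_nonneg (by positivity), Real.norm_of_nonneg (by positivity)]
  exact Real.rpow_le_rpow_of_exponent_le hx h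

theorem isBigO_rpow_of_deriv_atTop (hα : α ≠ 0) (hf : ∀ᶠ x in atTop, DifferentiableAt ℝ f x)
    (hf' : deriv f =O[atTop] (· ^ (α - 1))) : f =O[atTop] (· ^ max α 0) := by
  obtain ⟨C, hC⟩ := hf'.bound
  obtain ⟨R, hR⟩ := eventually_atTop.1 ((hf.and hC).and (eventually_gt_atTop 0))
  have hdiff : (fun x => f x - f R) =O[atTop] (fun x => C / α * (x ^ α - R ^ α)) := by
    refine IsBigO.of_bound 1 ?_
    filter_upwards [eventually_ge_atTop R] with x hx
    rw [one_mul]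
    refine (abs_sub_le_of_abs_deriv_le_rpow (hR R le_rfl).2 hx hα
      (fun y hy => (hR y hy.1).1.1) fun y hy => ?_).trans (le_abs_self _)
    simpa only [Real.norm_eq_abs, abs_of_pos (Real.rpow_pos_of_pos (hR y hy.1).2 _)]
      using (hR y hy.1).1.2
  have hconst : ∀ c : ℝ, (fun _ : ℝ => c) =O[atTop] (fun x : ℝ => x ^ max α 0) := fun c =>
    (IsSymbol.const (n := 0) c).isBigO.trans (isBigO_rpow_rpow_atTop (le_max_right α 0))
  have h := (hdiff.trans (((isBigO_rpow_rpow_atTop (le_max_left α 0)).sub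
    (hconst (R ^ α))).const_mul_left _)).add (hconst (f R))
  simpa only [sub_add_cancel] using h

theorem IsSymbol.of_deriv_atTop (hα : α ≠ 0) (hf : ∀ᶠ x in atTop, DifferentiableAt ℝ f x)
    (hf' : IsSymbol atTop n (α - 1) (deriv f)) : IsSymbol atTop (n + 1) (max α 0) f :=
  ⟨isBigO_rpow_of_deriv_atTop hα hf hf'.isBigO, hf,
    hf'.mono_order (isBigO_rpow_rpow_atTop (sub_le_sub_right (le_max_left α 0) 1))⟩

end Integration

/-- Functions behaving like a power `x ^ α` at the end `l`, in the differentiated sense: `f` is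
eventually positive and comparable to `x ^ α`, and the Euler remainder `x f' - α f` is a symbol
whose order gains a factor `x ^ β` that vanishes along `l`. -/
structure SmoothlyVarying (l : Filter ℝ) (n : ℕ) (α β : ℝ) (f : ℝ → ℝ) : Prop where
  tendsto_rate : Tendsto (fun x : ℝ => x ^ β) l (𝓝 0)
  eventually_pos : ∀ᶠ x in l, 0 < f x
  isTheta : f =Θ[l] (fun x : ℝ => x ^ α)
  differentiableAt : ∀ᶠ x in l, DifferentiableAt ℝ f x
  remainder : IsSymbol l n (α + β) (fun x => x * deriv f x - α * f x)

section SmoothlyVarying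

variable {l : Filter ℝ} {n : ℕ} {α β γ p : ℝ} {f g : ℝ → ℝ}

theorem eventually_pos_of_isEquivalent (h : f ~[l] g) (hg : ∀ᶠ x in l, 0 < g x) :
    ∀ᶠ x in l, 0 < f x := by
  obtain ⟨φ, hφ, hfg⟩ := h.exists_eq_mul
  filter_upwards [hφ.eventually_const_lt one_pos, hfg, hg] with x hφx hfgx hgx
  rw [hfgx]
  exact mul_pos hφx hgx

theorem hasDerivAt_mul_deriv_sub {x : ℝ} (hf : DifferentiableAt ℝ f x)
    (hf' : DifferentiableAt ℝ (deriv f) x) (α : ℝ) :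
    HasDerivAt (fun x => x * deriv f x - α * f x)
      (x * deriv (deriv f) x - (α - 1) * deriv f x) x := by
  refine (((hasDerivAt_id x).mul hf'.hasDerivAt).sub (hf.hasDerivAt.const_mul α)).congr_deriv ?_
  simp only [id]
  ring

namespace SmoothlyVarying

theorem of_succ (h : SmoothlyVarying l (n + 1) α β f) : SmoothlyVarying l n α β f :=
  { h with remainder := h.remainder.of_succ }

theorem const {c : ℝ} (hβ : Tendsto (fun x : ℝ => x ^ β) l (𝓝 0)) (hc : 0 < c) :
    SmoothlyVarying l n 0 β (fun _ => c) where
  tendsto_rate := hβ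
  eventually_pos := .of_forall fun _ => hc
  isTheta := by simpa only [Real.rpow_zero] using isTheta_const_const hc.ne' one_ne_zero
  differentiableAt := .of_forall fun _ => differentiableAt_const c
  remainder := by simpa using IsSymbol.zero

theorem differentiableAt_remainder (hf' : SmoothlyVarying l n (α - 1) β (deriv f))
    (hf : ∀ᶠ x in l, DifferentiableAt ℝ f x) :
    ∀ᶠ x in l, DifferentiableAt ℝ (fun x => x * deriv f x - α * f x) x := by
  filter_upwards [hf, hf'.differentiableAt] with x hfx hdx
    using (hasDerivAt_mul_deriv_sub hfx hdx α).differentiableAt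

end SmoothlyVarying

variable [IsOpenEnd l]

theorem isLittleO_rpow_add (h : Tendsto (fun x : ℝ => x ^ β) l (𝓝 0)) :
    (fun x : ℝ => x ^ (α + β)) =o[l] (fun x : ℝ => x ^ α) := by
  have h' := (isBigO_refl (fun x : ℝ => x ^ α) l).mul_isLittleO ((isLittleO_one_iff ℝ).2 h)
  simp only [mul_one] at h'
  exact (rpow_mul_rpow_eventuallyEq rfl).symm.trans_isLittleO h'

theorem isTheta_mul_rpow (hf : f =Θ[l] (fun x : ℝ => x ^ α)) (hg : g =Θ[l] (fun x : ℝ => x ^ β))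
    (h : α + β = γ) : (fun x => f x * g x) =Θ[l] (fun x : ℝ => x ^ γ) :=
  (hf.mul hg).trans_eventuallyEq (rpow_mul_rpow_eventuallyEq h)

theorem isTheta_id_mul (hf : f =Θ[l] (fun x : ℝ => x ^ (α - 1))) :
    (fun x => x * f x) =Θ[l] (fun x : ℝ => x ^ α) := by
  have h := isTheta_mul_rpow (isTheta_refl (fun x : ℝ => x ^ (1 : ℝ)) l) hf (add_sub_cancel 1 α)
  simpa only [Real.rpow_one] using h

theorem isTheta_of_id_mul (hf : (fun x => x * f x) =Θ[l] (fun x : ℝ => x ^ α)) :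
    f =Θ[l] (fun x : ℝ => x ^ (α - 1)) := by
  refine EventuallyEq.trans_isTheta ?_
    (isTheta_mul_rpow (isTheta_refl (fun x : ℝ => x ^ (-1 : ℝ)) l) hf (neg_add_eq_sub 1 α))
  filter_upwards [IsOpenEnd.eventually_pos] with x hx
  rw [Real.rpow_neg_one, inv_mul_cancel_left₀ hx.ne']

namespace SmoothlyVarying

theorem isLittleO_remainder (h : SmoothlyVarying l n α β f) :
    (fun x => x * deriv f x - α * f x) =o[l] (fun x : ℝ => x ^ α) :=
  h.remainder.isBigO.trans_isLittleO (isLittleO_rpow_add h.tendsto_rate)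

theorem congr (h : SmoothlyVarying l n α β f) (hfg : f =ᶠ[l] g) : SmoothlyVarying l n α β g where
  tendsto_rate := h.tendsto_rate
  eventually_pos := h.eventually_pos.mp (hfg.mono fun _ hx h => hx ▸ h)
  isTheta := hfg.symm.trans_isTheta h.isTheta
  differentiableAt := by
    filter_upwards [h.differentiableAt, IsOpenEnd.eventually_nhds hfg] with x hx hfgx
    exact hx.congr_of_eventuallyEq (EventuallyEq.symm hfgx)
  remainder := h.remainder.congr <| by
    filter_upwards [hfg, deriv_eventuallyEq hfg] with x hx hx'
    rw [hx, hx']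

theorem isSymbol_succ_of_isSymbol (h : SmoothlyVarying l n α β f) (hf : IsSymbol l n α f) :
    IsSymbol l (n + 1) α f := by
  refine ⟨h.isTheta.isBigO, h.differentiableAt, .of_id_mul ?_⟩
  have hR := h.remainder.mono_order (isLittleO_rpow_add h.tendsto_rate).isBigO
  exact (hR.add (hf.const_mul α)).congr (.of_forall fun x => sub_add_cancel _ _)

theorem isSymbol (h : SmoothlyVarying l n α β f) : IsSymbol l (n + 1) α f := by
  induction n with
  | zero => exact h.isSymbol_succ_of_isSymbol h.isTheta.isBigO
  | succ n ih => exact h.isSymbol_succ_of_isSymbol (ih h.of_succ)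

protected theorem id (hβ : Tendsto (fun x : ℝ => x ^ β) l (𝓝 0)) :
    SmoothlyVarying l n 1 β (fun x => x) where
  tendsto_rate := hβ
  eventually_pos := IsOpenEnd.eventually_pos
  isTheta := by simpa only [Real.rpow_one] using isTheta_refl (fun x : ℝ => x) l
  differentiableAt := .of_forall fun _ => differentiableAt_id
  remainder := by simpa using IsSymbol.zero

theorem mul (hf : SmoothlyVarying l n α β f) (hg : SmoothlyVarying l n γ β g) {δ : ℝ}
    (h : α + γ = δ) : SmoothlyVarying l n δ β (fun x => f x * g x) where
  tendsto_rate := hf.tendsto_rate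
  eventually_pos := hf.eventually_pos.and hg.eventually_pos |>.mono fun _ h => mul_pos h.1 h.2
  isTheta := isTheta_mul_rpow hf.isTheta hg.isTheta h
  differentiableAt := hf.differentiableAt.and hg.differentiableAt |>.mono fun _ h => h.1.mul h.2
  remainder := by
    have hR := (hf.remainder.mul hg.isSymbol.of_succ (by linarith : _ = δ + β)).add
      (hf.isSymbol.of_succ.mul hg.remainder (by linarith))
    refine hR.congr ?_
    filter_upwards [hf.differentiableAt, hg.differentiableAt] with x hfx hgx
    rw [deriv_fun_mul hfx hgx, ← h]
    ring

theorem isTheta_rpow (hf : SmoothlyVarying l n α β f) (h : α * p = γ) :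
    (fun x => f x ^ p) =Θ[l] (fun x : ℝ => x ^ γ) := by
  have hx : ∀ᶠ x : ℝ in l, 0 < x := IsOpenEnd.eventually_pos
  refine (hf.isTheta.rpow (hf.eventually_pos.mono fun x h => h.le)
    (hx.mono fun x h => Real.rpow_nonneg h.le α)).trans_eventuallyEq ?_
  filter_upwards [hx] with x hx0
  rw [← Real.rpow_mul hx0.le, h]

theorem rpow_of_isSymbol (hf : SmoothlyVarying l n α β f) (h : α * p = γ)
    (hfp : IsSymbol l n (α * (p - 1)) (fun x => f x ^ (p - 1))) :
    SmoothlyVarying l n γ β (fun x => f x ^ p) := by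
  have hd : ∀ᶠ x in l, HasDerivAt (fun x => f x ^ p) (deriv f x * p * f x ^ (p - 1)) x := by
    filter_upwards [hf.differentiableAt, hf.eventually_pos] with x hx hx0
      using hx.hasDerivAt.rpow_const (Or.inl hx0.ne')
  refine ⟨hf.tendsto_rate, hf.eventually_pos.mono fun x hx => Real.rpow_pos_of_pos hx p,
    hf.isTheta_rpow h, hd.mono fun x hx => hx.differentiableAt, ?_⟩
  have hR := (hfp.const_mul p).mul hf.remainder (by linarith : _ = γ + β)
  refine hR.congr ?_
  filter_upwards [hd, hf.eventually_pos] with x hx hx0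
  rw [hx.deriv, ← h, Real.rpow_sub_one hx0.ne']
  field_simp

theorem rpow (hf : SmoothlyVarying l n α β f) (p : ℝ) (h : α * p = γ) :
    SmoothlyVarying l n γ β (fun x => f x ^ p) := by
  induction n generalizing p γ with
  | zero => exact hf.rpow_of_isSymbol h (hf.isTheta_rpow rfl).isBigO
  | succ n ih => exact hf.rpow_of_isSymbol h (ih hf.of_succ (p - 1) rfl).isSymbol

protected theorem deriv (hf : SmoothlyVarying l (n + 1) α β f) (hα : 0 < α) :
    SmoothlyVarying l n (α - 1) β (deriv f) := by
  have hθ : (fun x => α * f x) =Θ[l] (fun x : ℝ => x ^ α) := hf.isTheta.const_mul_left hα.ne'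
  have hequiv : (fun x => x * deriv f x) ~[l] (fun x => α * f x) :=
    hf.isLittleO_remainder.trans_isTheta hθ.symm
  have hpos := eventually_pos_of_isEquivalent hequiv
    (hf.eventually_pos.mono fun x hx => mul_pos hα hx)
  have hd : ∀ᶠ x in l, DifferentiableAt ℝ (deriv f) x := hf.isSymbol.2.2.2.1
  have hx0 : ∀ᶠ x : ℝ in l, 0 < x := IsOpenEnd.eventually_pos
  refine ⟨hf.tendsto_rate, ?_, ?_, hd, ?_⟩
  · filter_upwards [hpos, hx0] with x hx hx0 using pos_of_mul_pos_right hx hx0.le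
  · exact isTheta_of_id_mul (hequiv.isTheta.trans hθ)
  · have hR := hf.remainder.2.2
    rw [add_sub_right_comm] at hR
    refine hR.congr ?_
    filter_upwards [hf.differentiableAt, hd] with x hfx hdx
      using (hasDerivAt_mul_deriv_sub hfx hdx α).deriv

theorem isSymbol_deriv_remainder (hf' : SmoothlyVarying l n (α - 1) β (deriv f))
    (hf : ∀ᶠ x in l, DifferentiableAt ℝ f x) :
    IsSymbol l n (α + β - 1) (deriv fun x => x * deriv f x - α * f x) := by
  rw [add_sub_right_comm]
  refine hf'.remainder.congr ?_
  filter_upwards [hf, hf'.differentiableAt] with x hfx hdx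
    using (hasDerivAt_mul_deriv_sub hfx hdx α).deriv.symm

/-- The Euler remainder of `f` has the Euler remainder of `f'` as its derivative, so only its size
has to be supplied. -/
theorem of_deriv (hf' : SmoothlyVarying l n (α - 1) β (deriv f)) (hα : 0 < α)
    (hf : ∀ᶠ x in l, DifferentiableAt ℝ f x)
    (hR : (fun x => x * deriv f x - α * f x) =O[l] (fun x : ℝ => x ^ (α + β))) :
    SmoothlyVarying l (n + 1) α β f := by
  have hx0 : ∀ᶠ x : ℝ in l, 0 < x := IsOpenEnd.eventually_pos
  have hθ := isTheta_id_mul hf'.isTheta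
  have hequiv : (fun x => α * f x) ~[l] (fun x => x * deriv f x) :=
    IsLittleO.trans_isTheta (((hR.trans_isLittleO
      (isLittleO_rpow_add hf'.tendsto_rate)).neg_left).congr_left fun x => neg_sub _ _) hθ.symm
  have hpos := eventually_pos_of_isEquivalent hequiv
    (hx0.and hf'.eventually_pos |>.mono fun x hx => mul_pos hx.1 hx.2)
  exact ⟨hf'.tendsto_rate, hpos.mono fun x hx => pos_of_mul_pos_right hx hα.le,
    (isTheta_const_mul_left hα.ne').1 (hequiv.isTheta.trans hθ), hf, hR,
    hf'.differentiableAt_remainder hf, hf'.isSymbol_deriv_remainder hf⟩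

theorem isSymbol_deriv_of_order_zero (hf : SmoothlyVarying l n 0 β f) :
    IsSymbol l n (β - 1) (deriv f) := by
  have h := hf.remainder
  simp only [zero_mul, sub_zero, zero_add] at h
  exact h.of_id_mul

theorem of_eventuallyEq_mul_one_add {Q : ℝ → ℝ} {κ : ℝ} (hκ : 0 < κ)
    (hβ : Tendsto (fun x : ℝ => x ^ β) l (𝓝 0)) (hQ : IsSymbol l (n + 1) β Q)
    (hf : f =ᶠ[l] fun x => κ * x ^ α * (1 + Q x)) : SmoothlyVarying l n α β f := by
  have hQ₁ : Tendsto (fun x => 1 + Q x) l (𝓝 1) := by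
    simpa using (hQ.isBigO.trans_tendsto hβ).const_add 1
  have hone : SmoothlyVarying l n 0 β (fun x => 1 + Q x) := by
    refine ⟨hβ, hQ₁.eventually_const_lt one_pos, ?_, hQ.2.1.mono fun x hx => hx.const_add 1, ?_⟩
    · simp only [Real.rpow_zero]
      exact ((isEquivalent_const_iff_tendsto one_ne_zero).2 hQ₁).isTheta
    · have hR := IsSymbol.id.mul hQ.2.2 (by ring : 1 + (β - 1) = 0 + β)
      simpa using hR
  have hpow : SmoothlyVarying l n α β (fun x => x ^ α) := (SmoothlyVarying.id hβ).rpow α (one_mul α)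
  exact (((const hβ hκ).mul hpow (zero_add α)).mul hone (add_zero α)).congr hf.symm

theorem of_deriv_nhdsGT (hf' : SmoothlyVarying (𝓝[>] 0) n (α - 1) β (deriv f)) (hα : 0 < α)
    (hβ : 0 < α + β) (hf : ∀ᶠ x in 𝓝[>] 0, DifferentiableAt ℝ f x)
    (hf₀ : Tendsto f (𝓝[>] 0) (𝓝 0)) : SmoothlyVarying (𝓝[>] 0) (n + 1) α β f := by
  have hxf' : Tendsto (fun x => x * deriv f x) (𝓝[>] 0) (𝓝 0) :=
    (isTheta_id_mul hf'.isTheta).isBigO.trans_tendsto (tendsto_rpow_nhdsGT_zero hα)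
  refine hf'.of_deriv hα hf (isBigO_rpow_of_deriv_nhdsGT hβ (hf'.differentiableAt_remainder hf) ?_
    (hf'.isSymbol_deriv_remainder hf).isBigO)
  simpa using hxf'.sub (hf₀.const_mul α)

theorem of_deriv_atTop (hf' : SmoothlyVarying atTop n (α - 1) β (deriv f)) (hα : 0 < α)
    (hβ : 0 < α + β) (hf : ∀ᶠ x in atTop, DifferentiableAt ℝ f x) :
    SmoothlyVarying atTop (n + 1) α β f := by
  have hR := isBigO_rpow_of_deriv_atTop hβ.ne' (hf'.differentiableAt_remainder hf)
    (hf'.isSymbol_deriv_remainder hf).isBigO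
  rw [max_eq_left hβ.le] at hR
  exact hf'.of_deriv hα hf hR

end SmoothlyVarying

end SmoothlyVarying

theorem continuousOn_deriv_deriv {f : ℝ → ℝ} {s : Set ℝ} (hf : ContDiffOn ℝ 2 f s)
    (hs : IsOpen s) : ContinuousOn (deriv (deriv f)) s :=
  (hf.deriv_of_isOpen (m := 1) hs (by norm_num)).continuousOn_deriv_of_isOpen hs le_rfl

section Primitive

variable {g : ℝ → ℝ} {e ρ : ℝ}

theorem intervalIntegrable_of_isBigO_rpow (hg : ContinuousOn g (Ioi 0)) (he : -1 < e)
    (hO : g =O[𝓝[>] 0] (· ^ e)) (hρ : 0 < ρ) : IntervalIntegrable g volume 0 ρ := by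
  obtain ⟨C, hC⟩ := hO.bound
  obtain ⟨r, hr, hrC⟩ := mem_nhdsGT_iff_exists_Ioc_subset.1 hC
  have hr₀ : 0 < min r ρ := lt_min hr hρ
  have hsmall : IntervalIntegrable g volume 0 (min r ρ) := by
    refine ((intervalIntegral.intervalIntegrable_rpow' he).norm.const_mul C).mono_fun' ?_ ?_
    · exact (hg.mono fun x hx => (uIoc_of_le hr₀.le ▸ hx).1).aestronglyMeasurable
        measurableSet_uIoc
    · refine (ae_restrict_iff' measurableSet_uIoc).2 (.of_forall fun x hx => ?_)
      rw [uIoc_of_le hr₀.le] at hx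
      exact hrC ⟨hx.1, hx.2.trans (min_le_left _ _)⟩
  refine hsmall.trans (hg.mono fun x hx => ?_).intervalIntegrable
  rw [uIcc_of_le (min_le_right _ _)] at hx
  exact hr₀.trans_le hx.1

theorem hasDerivAt_integral_of_continuousOn_Ioi (hg : ContinuousOn g (Ioi 0))
    (hi : IntervalIntegrable g volume 0 ρ) (hρ : 0 < ρ) :
    HasDerivAt (fun ρ => ∫ y in (0 : ℝ)..ρ, g y) (g ρ) ρ :=
  intervalIntegral.integral_hasDerivAt_right hi
    (hg.stronglyMeasurableAtFilter isOpen_Ioi ρ hρ) (hg.continuousAt (isOpen_Ioi.mem_nhds hρ))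

theorem tendsto_integral_nhdsGT_zero (hi : IntervalIntegrable g volume 0 ρ) (hρ : 0 < ρ) :
    Tendsto (fun ρ => ∫ y in (0 : ℝ)..ρ, g y) (𝓝[>] 0) (𝓝 0) := by
  have hmem : uIcc 0 ρ ∈ 𝓝[>] 0 := by
    rw [uIcc_of_le hρ.le]
    exact Icc_mem_nhdsGT hρ
  have hc := intervalIntegral.continuousOn_primitive_interval' hi left_mem_uIcc 0 left_mem_uIcc
  simpa using hc.mono_left (nhdsWithin_le_of_mem hmem)

theorem deriv_integral_eventuallyEq {l : Filter ℝ} [IsOpenEnd l] (hg : ContinuousOn g (Ioi 0))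
    (hi : ∀ ρ, 0 < ρ → IntervalIntegrable g volume 0 ρ) :
    deriv (fun ρ => ∫ y in (0 : ℝ)..ρ, g y) =ᶠ[l] g := by
  filter_upwards [IsOpenEnd.eventually_pos] with x hx
    using (hasDerivAt_integral_of_continuousOn_Ioi hg (hi x hx) hx).deriv

theorem eventually_differentiableAt_integral {l : Filter ℝ} [IsOpenEnd l]
    (hg : ContinuousOn g (Ioi 0)) (hi : ∀ ρ, 0 < ρ → IntervalIntegrable g volume 0 ρ) :
    ∀ᶠ x in l, DifferentiableAt ℝ (fun ρ => ∫ y in (0 : ℝ)..ρ, g y) x := by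
  filter_upwards [IsOpenEnd.eventually_pos] with x hx
    using (hasDerivAt_integral_of_continuousOn_Ioi hg (hi x hx) hx).differentiableAt

theorem contDiffOn_integral {n : ℕ} (hg : ContDiffOn ℝ n g (Ioi 0))
    (hi : ∀ ρ, 0 < ρ → IntervalIntegrable g volume 0 ρ) :
    ContDiffOn ℝ (n + 1) (fun ρ => ∫ y in (0 : ℝ)..ρ, g y) (Ioi 0) := by
  have hd : ∀ x ∈ Ioi (0 : ℝ), HasDerivAt (fun ρ => ∫ y in (0 : ℝ)..ρ, g y) (g x) x :=
    fun x hx => hasDerivAt_integral_of_continuousOn_Ioi hg.continuousOn (hi x hx) hx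
  exact (contDiffOn_succ_iff_deriv_of_isOpen isOpen_Ioi).2
    ⟨fun x hx => (hd x hx).differentiableAt.differentiableWithinAt, by simp,
      hg.congr fun x hx => (hd x hx).deriv⟩

end Primitive

section SoundPrimitive

variable {l : Filter ℝ} {n : ℕ} {P : ℝ → ℝ} {γ β ρ : ℝ}

/-- The integrand `√(P'(y)) / y` of the primitive `k`. -/
noncomputable def soundSpeedRatio (P : ℝ → ℝ) (y : ℝ) : ℝ :=
  Real.sqrt (deriv P y) / y

/-- The function `k(ρ) = ∫₀^ρ √(P'(y)) / y dy`. -/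
noncomputable def soundPrimitive (P : ℝ → ℝ) (ρ : ℝ) : ℝ :=
  ∫ y in (0 : ℝ)..ρ, soundSpeedRatio P y

/-- The properties of `k` on the open half-line that make the kernel coefficients smooth enough for
the integrals defining `b₂`. -/
structure IsRegularPrimitive (k : ℝ → ℝ) : Prop where
  contDiffOn : ContDiffOn ℝ 3 k (Ioi 0)
  pos : ∀ ρ, 0 < ρ → 0 < k ρ
  deriv_pos : ∀ ρ, 0 < ρ → 0 < deriv k ρ

theorem soundSpeedRatio_pos (hP' : 0 < deriv P ρ) (hρ : 0 < ρ) : 0 < soundSpeedRatio P ρ :=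
  div_pos (Real.sqrt_pos.2 hP') hρ

theorem contDiffOn_soundSpeedRatio {m n : WithTop ℕ∞} (hP : ContDiffOn ℝ n P (Ioi 0))
    (hP' : ∀ ρ, 0 < ρ → 0 < deriv P ρ) (hmn : m + 1 ≤ n) :
    ContDiffOn ℝ m (soundSpeedRatio P) (Ioi 0) :=
  ((hP.deriv_of_isOpen isOpen_Ioi hmn).sqrt fun ρ hρ => (hP' ρ hρ).ne').div contDiffOn_id
    fun _ hρ => hρ.ne'

theorem continuousOn_soundSpeedRatio (hP : ContDiffOn ℝ 1 P (Ioi 0))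
    (hP' : ∀ ρ, 0 < ρ → 0 < deriv P ρ) : ContinuousOn (soundSpeedRatio P) (Ioi 0) :=
  (contDiffOn_soundSpeedRatio (m := 0) hP hP' (by simp)).continuousOn

theorem SmoothlyVarying.soundSpeedRatio [IsOpenEnd l] (hP : SmoothlyVarying l (n + 1) γ β P)
    (hγ : 0 < γ) : SmoothlyVarying l n ((γ - 1) / 2 - 1) β (soundSpeedRatio P) := by
  have h := ((hP.deriv hγ).rpow (1 / 2) rfl).mul
    ((SmoothlyVarying.id hP.tendsto_rate).rpow (-1) (one_mul _))
    (by ring : _ = (γ - 1) / 2 - 1)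
  refine h.congr (.of_forall fun x => ?_)
  simp only [_root_.soundSpeedRatio, Real.sqrt_eq_rpow, Real.rpow_neg_one, div_eq_mul_inv]

theorem intervalIntegrable_soundSpeedRatio (hP : ContDiffOn ℝ 1 P (Ioi 0))
    (hP' : ∀ ρ, 0 < ρ → 0 < deriv P ρ) (hP₀ : SmoothlyVarying (𝓝[>] 0) (n + 1) γ β P)
    (hγ : 1 < γ) (hρ : 0 < ρ) : IntervalIntegrable (soundSpeedRatio P) volume 0 ρ :=
  intervalIntegrable_of_isBigO_rpow (continuousOn_soundSpeedRatio hP hP') (by linarith)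
    (hP₀.soundSpeedRatio (by linarith)).isTheta.isBigO hρ

theorem deriv_soundPrimitive (hP : ContDiffOn ℝ 1 P (Ioi 0)) (hP' : ∀ ρ, 0 < ρ → 0 < deriv P ρ)
    (hi : IntervalIntegrable (soundSpeedRatio P) volume 0 ρ) (hρ : 0 < ρ) :
    deriv (soundPrimitive P) ρ = soundSpeedRatio P ρ :=
  (hasDerivAt_integral_of_continuousOn_Ioi
    (continuousOn_soundSpeedRatio hP hP') hi hρ).deriv

theorem isRegularPrimitive_soundPrimitive (hP : ContDiffOn ℝ 3 P (Ioi 0))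
    (hP' : ∀ ρ, 0 < ρ → 0 < deriv P ρ)
    (hi : ∀ ρ, 0 < ρ → IntervalIntegrable (soundSpeedRatio P) volume 0 ρ) :
    IsRegularPrimitive (soundPrimitive P) where
  contDiffOn := by
    have h := contDiffOn_integral (n := 2)
      (contDiffOn_soundSpeedRatio hP hP' (by norm_num)) hi
    exact h.of_le (by norm_num)
  pos ρ hρ := intervalIntegral.intervalIntegral_pos_of_pos_on (hi ρ hρ)
    (fun y hy => soundSpeedRatio_pos (hP' y hy.1) hy.1) hρ
  deriv_pos ρ hρ := by
    rw [deriv_soundPrimitive (hP.of_le (by norm_num)) hP' (hi ρ hρ) hρ]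
    exact soundSpeedRatio_pos (hP' ρ hρ) hρ

theorem smoothlyVarying_soundPrimitive_nhdsGT (hP : ContDiffOn ℝ 1 P (Ioi 0))
    (hP' : ∀ ρ, 0 < ρ → 0 < deriv P ρ) (hP₀ : SmoothlyVarying (𝓝[>] 0) (n + 1) γ β P)
    (hγ : 1 < γ) (hβ : 0 < β) :
    SmoothlyVarying (𝓝[>] 0) (n + 1) ((γ - 1) / 2) β (soundPrimitive P) := by
  have hc := continuousOn_soundSpeedRatio hP hP'
  have hi : ∀ ρ, 0 < ρ → IntervalIntegrable (soundSpeedRatio P) volume 0 ρ :=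
    fun ρ hρ => intervalIntegrable_soundSpeedRatio hP hP' hP₀ hγ hρ
  exact ((hP₀.soundSpeedRatio (by linarith)).congr
    (deriv_integral_eventuallyEq hc hi).symm).of_deriv_nhdsGT (by linarith) (by linarith)
    (eventually_differentiableAt_integral hc hi)
    (tendsto_integral_nhdsGT_zero (hi 1 one_pos) one_pos)

theorem smoothlyVarying_soundPrimitive_atTop (hP : ContDiffOn ℝ 1 P (Ioi 0))
    (hP' : ∀ ρ, 0 < ρ → 0 < deriv P ρ)
    (hi : ∀ ρ, 0 < ρ → IntervalIntegrable (soundSpeedRatio P) volume 0 ρ)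
    (hP₁ : SmoothlyVarying atTop (n + 1) γ β P) (hγ : 1 < γ) (hβ : 0 < (γ - 1) / 2 + β) :
    SmoothlyVarying atTop (n + 1) ((γ - 1) / 2) β (soundPrimitive P) := by
  have hc := continuousOn_soundSpeedRatio hP hP'
  exact ((hP₁.soundSpeedRatio (by linarith)).congr
    (deriv_integral_eventuallyEq hc hi).symm).of_deriv_atTop (by linarith) hβ
    (eventually_differentiableAt_integral hc hi)

end SoundPrimitive

section Kernel

/-- The leading coefficient `a₁` of the entropy kernel. -/
noncomputable def kernelA₁ (M lam : ℝ) (k : ℝ → ℝ) (ρ : ℝ) : ℝ :=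
  M * k ρ ^ (-lam) * deriv k ρ ^ (-(1 : ℝ) / 2)

/-- The leading coefficient `b₁` of the entropy flux kernel. -/
noncomputable def kernelB₁ (M lam : ℝ) (k : ℝ → ℝ) (ρ : ℝ) : ℝ :=
  M * ρ * k ρ ^ (-lam - 1) * deriv k ρ ^ ((1 : ℝ) / 2)

/-- The integrand `k ^ lam (k') ^ (-1/2) f''` in the formula for `b₂`. -/
noncomputable def kernelSource (lam : ℝ) (k f : ℝ → ℝ) (s : ℝ) : ℝ :=
  k s ^ lam * deriv k s ^ (-(1 : ℝ) / 2) * deriv (deriv f) s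

/-- The integrand `s k ^ lam (k') ^ (1/2) f''` in the formula for `b₂`. -/
noncomputable def weightedKernelSource (lam : ℝ) (k f : ℝ → ℝ) (s : ℝ) : ℝ :=
  s * k s ^ lam * deriv k s ^ ((1 : ℝ) / 2) * deriv (deriv f) s

/-- The second coefficient `b₂` of the entropy flux kernel, as a function of `k`, `a₁` and `b₁`. -/
noncomputable def kernelB₂ (lam : ℝ) (k a b : ℝ → ℝ) (ρ : ℝ) : ℝ :=
  -(4 * (lam + 1))⁻¹ * ρ * deriv k ρ ^ ((1 : ℝ) / 2) * k ρ ^ (-(lam + 2)) *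
    (∫ s in (0 : ℝ)..ρ, kernelSource lam k a s)
  - (4 * (lam + 1))⁻¹ * k ρ ^ (-(lam + 2)) * deriv k ρ ^ (-(1 : ℝ) / 2) *
    (∫ s in (0 : ℝ)..ρ, kernelSource (lam + 1) k b s)
  + (4 * (lam + 1))⁻¹ * k ρ ^ (-(lam + 2)) * deriv k ρ ^ (-(1 : ℝ) / 2) *
    (∫ s in (0 : ℝ)..ρ, weightedKernelSource lam k a s)

variable {l : Filter ℝ} {n : ℕ} {k f a b : ℝ → ℝ} {M lam θ β δ ρ : ℝ}

theorem integral_one_sub_sq_rpow_pos (hlam : 0 ≤ lam) :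
    0 < ∫ z in (-1 : ℝ)..1, (1 - z ^ 2) ^ lam := by
  have hc : Continuous fun z : ℝ => (1 - z ^ 2) ^ lam :=
    (continuous_const.sub (continuous_pow 2)).rpow_const fun _ => Or.inr hlam
  refine intervalIntegral.intervalIntegral_pos_of_pos_on (hc.intervalIntegrable _ _)
    (fun z hz => Real.rpow_pos_of_pos ?_ lam) (by norm_num)
  nlinarith [hz.1, hz.2]

theorem kernelConstant_pos (hlam : 0 < lam) :
    0 < (2 * lam / Real.sqrt (2 * lam + 1) * ∫ z in (-1 : ℝ)..1, (1 - z ^ 2) ^ lam)⁻¹ := by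
  have hpos := integral_one_sub_sq_rpow_pos hlam.le
  positivity

theorem kernelB₁_pos (hM : 0 < M) (hk : 0 < k ρ) (hk' : 0 < deriv k ρ) (hρ : 0 < ρ) :
    0 < kernelB₁ M lam k ρ := by
  unfold kernelB₁
  positivity

namespace SmoothlyVarying

variable [IsOpenEnd l]

theorem kernelA₁ (hk : SmoothlyVarying l (n + 1) θ β k) (hθ : 0 < θ) (hM : 0 < M) :
    SmoothlyVarying l n (1 / 2 - θ * (lam + 1 / 2)) β (kernelA₁ M lam k) :=
  (((const hk.tendsto_rate hM).mul (hk.of_succ.rpow (-lam) rfl) (zero_add _)).mul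
    ((hk.deriv hθ).rpow (-(1 : ℝ) / 2) rfl) (by ring))

theorem kernelB₁ (hk : SmoothlyVarying l (n + 1) θ β k) (hθ : 0 < θ) (hM : 0 < M) :
    SmoothlyVarying l n (1 / 2 - θ * (lam + 1 / 2)) β (kernelB₁ M lam k) :=
  ((((const hk.tendsto_rate hM).mul (.id hk.tendsto_rate) (zero_add _)).mul
    (hk.of_succ.rpow (-lam - 1) rfl) rfl).mul ((hk.deriv hθ).rpow ((1 : ℝ) / 2) rfl) (by ring))

theorem isSymbol_kernelSource (hk : SmoothlyVarying l (n + 1) θ β k) (hθ : 0 < θ)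
    (hf : IsSymbol l n δ (deriv (deriv f))) :
    IsSymbol l n (θ * lam - (θ - 1) / 2 + δ) (kernelSource lam k f) :=
  ((hk.rpow lam rfl).isSymbol.of_succ.of_succ.mul
    ((hk.deriv hθ).rpow (-(1 : ℝ) / 2) rfl).isSymbol.of_succ rfl).mul hf (by ring)

theorem isSymbol_weightedKernelSource (hk : SmoothlyVarying l (n + 1) θ β k) (hθ : 0 < θ)
    (hf : IsSymbol l n δ (deriv (deriv f))) :
    IsSymbol l n (1 + θ * lam + (θ - 1) / 2 + δ) (weightedKernelSource lam k f) :=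
  ((IsSymbol.id.mul (hk.rpow lam rfl).isSymbol.of_succ.of_succ rfl).mul
    ((hk.deriv hθ).rpow ((1 : ℝ) / 2) rfl).isSymbol.of_succ rfl).mul hf (by ring)

theorem isSymbol_kernelB₂ (hk : SmoothlyVarying l (n + 1) θ β k) (hθ : 0 < θ)
    (hI₁ : IsSymbol l n 0 fun ρ => ∫ s in (0 : ℝ)..ρ, kernelSource lam k a s)
    (hI₂ : IsSymbol l n θ fun ρ => ∫ s in (0 : ℝ)..ρ, kernelSource (lam + 1) k b s)
    (hI₃ : IsSymbol l n θ fun ρ => ∫ s in (0 : ℝ)..ρ, weightedKernelSource lam k a s) :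
    IsSymbol l n (1 / 2 - θ * (lam + 3 / 2)) (kernelB₂ lam k a b) := by
  have hkp := (hk.rpow (-(lam + 2)) rfl).isSymbol.of_succ.of_succ
  have hk'p : ∀ p, IsSymbol l n ((θ - 1) * p) (fun ρ => deriv k ρ ^ p) :=
    fun p => ((hk.deriv hθ).rpow p rfl).isSymbol.of_succ
  have h₁ := (((IsSymbol.id.const_mul (-(4 * (lam + 1))⁻¹)).mul (hk'p (1 / 2)) rfl).mul
    hkp rfl).mul hI₁ (by ring : _ = 1 / 2 - θ * (lam + 3 / 2))
  have hfactor := (hkp.const_mul (4 * (lam + 1))⁻¹).mul (hk'p (-1 / 2)) rfl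
  have h₂ := hfactor.mul hI₂ (by ring : _ = 1 / 2 - θ * (lam + 3 / 2))
  have h₃ := hfactor.mul hI₃ (by ring : _ = 1 / 2 - θ * (lam + 3 / 2))
  exact (h₁.add ((h₂.const_mul (-1)).add h₃)).congr
    (.of_forall fun ρ => by simp only [kernelB₂]; ring)

end SmoothlyVarying

namespace IsRegularPrimitive

theorem contDiffOn_deriv (hk : IsRegularPrimitive k) : ContDiffOn ℝ 2 (deriv k) (Ioi 0) :=
  hk.contDiffOn.deriv_of_isOpen isOpen_Ioi (by norm_num)

theorem contDiffOn_rpow (hk : IsRegularPrimitive k) (p : ℝ) :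
    ContDiffOn ℝ 2 (fun ρ => k ρ ^ p) (Ioi 0) :=
  (hk.contDiffOn.of_le (by norm_num)).rpow_const_of_ne fun ρ hρ => (hk.pos ρ hρ).ne'

theorem contDiffOn_deriv_rpow (hk : IsRegularPrimitive k) (p : ℝ) :
    ContDiffOn ℝ 2 (fun ρ => deriv k ρ ^ p) (Ioi 0) :=
  hk.contDiffOn_deriv.rpow_const_of_ne fun ρ hρ => (hk.deriv_pos ρ hρ).ne'

theorem contDiffOn_kernelA₁ (hk : IsRegularPrimitive k) :
    ContDiffOn ℝ 2 (kernelA₁ M lam k) (Ioi 0) :=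
  (contDiffOn_const.mul (hk.contDiffOn_rpow _)).mul (hk.contDiffOn_deriv_rpow _)

theorem contDiffOn_kernelB₁ (hk : IsRegularPrimitive k) :
    ContDiffOn ℝ 2 (kernelB₁ M lam k) (Ioi 0) :=
  ((contDiffOn_const.mul contDiffOn_id).mul (hk.contDiffOn_rpow _)).mul (hk.contDiffOn_deriv_rpow _)

theorem continuousOn_kernelSource (hk : IsRegularPrimitive k) (hf : ContDiffOn ℝ 2 f (Ioi 0)) :
    ContinuousOn (kernelSource lam k f) (Ioi 0) :=
  ((hk.contDiffOn_rpow _).continuousOn.mul (hk.contDiffOn_deriv_rpow _).continuousOn).mul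
    (continuousOn_deriv_deriv hf isOpen_Ioi)

theorem continuousOn_weightedKernelSource (hk : IsRegularPrimitive k)
    (hf : ContDiffOn ℝ 2 f (Ioi 0)) : ContinuousOn (weightedKernelSource lam k f) (Ioi 0) :=
  ((continuousOn_id.mul (hk.contDiffOn_rpow _).continuousOn).mul
    (hk.contDiffOn_deriv_rpow _).continuousOn).mul (continuousOn_deriv_deriv hf isOpen_Ioi)

end IsRegularPrimitive

/-- Convergence of the three integrals in the formula for `b₂`. -/
def IntegrableSources (lam : ℝ) (k a b : ℝ → ℝ) (ρ : ℝ) : Prop :=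
  IntervalIntegrable (kernelSource lam k a) volume 0 ρ ∧
    IntervalIntegrable (kernelSource (lam + 1) k b) volume 0 ρ ∧
    IntervalIntegrable (weightedKernelSource lam k a) volume 0 ρ

/-- When `θ (lam + 1 / 2) = 1 / 2`, both `a₁` and `b₁` have order zero at `0⁺`, so their second
derivatives gain the factor `ρ ^ β`; this gain makes the integrals converge. -/
theorem integrableSources_of_nhdsGT (hk : IsRegularPrimitive k)
    (hk₀ : SmoothlyVarying (𝓝[>] 0) (n + 2) θ β k) (hθ : 0 < θ) (hβ : θ < β)
    (hcrit : θ * (lam + 1 / 2) = 1 / 2) (hM : 0 < M) (hρ : 0 < ρ) :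
    IntegrableSources lam k (kernelA₁ M lam k) (kernelB₁ M lam k) ρ := by
  have ha := hk₀.kernelA₁ (lam := lam) hθ hM
  have hb := hk₀.kernelB₁ (lam := lam) hθ hM
  rw [hcrit, sub_self] at ha hb
  have ha₂ := ha.isSymbol_deriv_of_order_zero.2.2
  have hb₂ := hb.isSymbol_deriv_of_order_zero.2.2
  have hk₁ := hk₀.of_succ
  exact
    ⟨intervalIntegrable_of_isBigO_rpow (hk.continuousOn_kernelSource hk.contDiffOn_kernelA₁)
      (by linarith) (hk₁.isSymbol_kernelSource hθ ha₂).isBigO hρ,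
    intervalIntegrable_of_isBigO_rpow (hk.continuousOn_kernelSource hk.contDiffOn_kernelB₁)
      (by linarith) (hk₁.isSymbol_kernelSource hθ hb₂).isBigO hρ,
    intervalIntegrable_of_isBigO_rpow
      (hk.continuousOn_weightedKernelSource hk.contDiffOn_kernelA₁) (by linarith)
      (hk₁.isSymbol_weightedKernelSource hθ ha₂).isBigO hρ⟩

theorem isSymbol_integral_atTop {α : ℝ} (hα : α ≠ 0) (hf : ContinuousOn f (Ioi 0))
    (hi : ∀ ρ, 0 < ρ → IntervalIntegrable f volume 0 ρ) (hf₁ : IsSymbol atTop n (α - 1) f) :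
    IsSymbol atTop (n + 1) (max α 0) (fun ρ => ∫ s in (0 : ℝ)..ρ, f s) :=
  .of_deriv_atTop hα (eventually_differentiableAt_integral hf hi)
    (hf₁.congr (deriv_integral_eventuallyEq hf hi).symm)

/-- The integrals of the two sources of order `-1` may grow logarithmically; bounding them by
`ρ ^ θ` costs nothing, because this is the size of the first term. -/
theorem isSymbol_kernelB₂_atTop (hk : IsRegularPrimitive k)
    (hk₁ : SmoothlyVarying atTop (n + 2) θ β k) (hθ : 0 < θ) (hM : 0 < M)
    (hi : ∀ ρ, 0 < ρ → IntegrableSources lam k (kernelA₁ M lam k) (kernelB₁ M lam k) ρ) :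
    IsSymbol atTop (n + 1) (1 / 2 - θ * (lam + 3 / 2))
      (kernelB₂ lam k (kernelA₁ M lam k) (kernelB₁ M lam k)) := by
  have ha₂ := (hk₁.kernelA₁ (lam := lam) hθ hM).isSymbol.2.2.2.2
  have hb₂ := (hk₁.kernelB₁ (lam := lam) hθ hM).isSymbol.2.2.2.2
  have horder : ∀ {g : ℝ → ℝ} {δ : ℝ}, IsSymbol atTop n δ g → δ ≤ θ - 1 →
      IsSymbol atTop n (θ - 1) g := fun h hδ => h.mono_order (isBigO_rpow_rpow_atTop hδ)
  have hI₁ := isSymbol_integral_atTop (neg_ne_zero.2 hθ.ne')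
    (hk.continuousOn_kernelSource hk.contDiffOn_kernelA₁) (fun ρ hρ => (hi ρ hρ).1)
    (by convert hk₁.of_succ.isSymbol_kernelSource hθ ha₂ using 1; ring)
  have hI₂ := isSymbol_integral_atTop hθ.ne'
    (hk.continuousOn_kernelSource hk.contDiffOn_kernelB₁) (fun ρ hρ => (hi ρ hρ).2.1)
    (horder (hk₁.of_succ.isSymbol_kernelSource hθ hb₂) (by linarith))
  have hI₃ := isSymbol_integral_atTop hθ.ne'
    (hk.continuousOn_weightedKernelSource hk.contDiffOn_kernelA₁)
    (fun ρ hρ => (hi ρ hρ).2.2)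
    (horder (hk₁.of_succ.isSymbol_weightedKernelSource hθ ha₂) (by linarith))
  rw [max_eq_right (neg_nonpos.2 hθ.le)] at hI₁
  rw [max_eq_left hθ.le] at hI₂ hI₃
  exact hk₁.isSymbol_kernelB₂ hθ hI₁ hI₂ hI₃

end Kernel

section Pressure

variable {n : ℕ} {P Q : ℝ → ℝ} {γ γ₁ γ₂ β β₁ β₂ κ C r ε M lam : ℝ}

theorem isSymbol_of_abs_iteratedDeriv_le {l : Filter ℝ} [IsOpenEnd l] {f : ℝ → ℝ} {α : ℝ}
    (hf : ContDiffOn ℝ n f (Ioi 0))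
    (hC : ∀ᶠ x in l, ∀ j ≤ n, |iteratedDeriv j f x| ≤ C * x ^ (α - j)) : IsSymbol l n α f := by
  refine .of_iteratedDeriv ?_ fun j hj => IsBigO.of_bound C ?_
  · filter_upwards [IsOpenEnd.eventually_pos] with x hx using hf.contDiffAt (isOpen_Ioi.mem_nhds hx)
  · filter_upwards [hC, IsOpenEnd.eventually_pos] with x hx hx₀
    rw [Real.norm_of_nonneg (Real.rpow_nonneg hx₀.le _)]
    exact hx j hj

theorem smoothlyVarying_pressure_nhdsGT (hr : 0 < r) (hκ : 0 < κ) (hβ : 0 < β)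
    (hQ : ContDiffOn ℝ (n + 1 : ℕ) Q (Ioi 0))
    (hP : ∀ ρ ∈ Ioo 0 r, P ρ = κ * ρ ^ γ * (1 + Q ρ))
    (hQC : ∀ ρ ∈ Ioo 0 r, ∀ j ≤ n + 1, |iteratedDeriv j Q ρ| ≤ C * ρ ^ (β - j)) :
    SmoothlyVarying (𝓝[>] 0) n γ β P := by
  have hmem : Ioo 0 r ∈ 𝓝[>] 0 := Ioo_mem_nhdsGT hr
  exact .of_eventuallyEq_mul_one_add hκ (tendsto_rpow_nhdsGT_zero hβ)
    (isSymbol_of_abs_iteratedDeriv_le hQ (mem_of_superset hmem hQC)) (mem_of_superset hmem hP)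

theorem smoothlyVarying_pressure_atTop (hκ : 0 < κ) (hβ : 0 < β) (hβε : β ≤ ε)
    (hQ : ContDiffOn ℝ (n + 1 : ℕ) Q (Ioi 0))
    (hP : ∀ ρ, r ≤ ρ → P ρ = κ * ρ ^ γ * (1 + Q ρ))
    (hQC : ∀ ρ, r ≤ ρ → ∀ j ≤ n + 1, |iteratedDeriv j Q ρ| ≤ C * ρ ^ (-ε - j)) :
    SmoothlyVarying atTop n γ (-β) P := by
  have hmem : Ici r ∈ atTop := Ici_mem_atTop r
  exact .of_eventuallyEq_mul_one_add hκ (tendsto_rpow_neg_atTop hβ)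
    ((isSymbol_of_abs_iteratedDeriv_le hQ (mem_of_superset hmem hQC)).mono_order
      (isBigO_rpow_rpow_atTop (neg_le_neg hβε))) (mem_of_superset hmem hP)

theorem kernel_coefficients_of_smoothlyVarying (hP : ContDiffOn ℝ 3 P (Ioi 0))
    (hP' : ∀ ρ, 0 < ρ → 0 < deriv P ρ) (hP₀ : SmoothlyVarying (𝓝[>] 0) 2 γ₁ β₁ P)
    (hP₁ : SmoothlyVarying atTop 3 γ₂ β₂ P) (hγ₁ : 1 < γ₁) (hγ₂ : 1 < γ₂)
    (hβ₁ : (γ₁ - 1) / 2 < β₁) (hβ₂ : 0 < (γ₂ - 1) / 2 + β₂) (hM : 0 < M)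
    (hcrit : (γ₁ - 1) / 2 * (lam + 1 / 2) = 1 / 2) {k a b : ℝ → ℝ}
    (hk : k = soundPrimitive P) (ha : a = kernelA₁ M lam k) (hb : b = kernelB₁ M lam k) :
    (∀ ρ, 0 < ρ → IntegrableSources lam k a b ρ) ∧ (∀ ρ, 0 < ρ → 0 < b ρ) ∧
      IsSymbol atTop 2 (1 / 2 - (γ₂ - 1) / 2 * (lam + 1 / 2)) b ∧
      IsSymbol atTop 2 (1 / 2 - (γ₂ - 1) / 2 * (lam + 3 / 2)) (kernelB₂ lam k a b) := by
  subst hk ha hb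
  have hP₁C := hP.of_le (by norm_num : (1 : WithTop ℕ∞) ≤ 3)
  have hi : ∀ ρ, 0 < ρ → IntervalIntegrable (soundSpeedRatio P) volume 0 ρ :=
    fun _ => intervalIntegrable_soundSpeedRatio hP₁C hP' hP₀ hγ₁
  have hk := isRegularPrimitive_soundPrimitive hP hP' hi
  have hk₀ := smoothlyVarying_soundPrimitive_nhdsGT hP₁C hP' hP₀ hγ₁ (by linarith)
  have hk₁ := smoothlyVarying_soundPrimitive_atTop hP₁C hP' hi hP₁ hγ₂ hβ₂
  have hθ₂ : 0 < (γ₂ - 1) / 2 := by linarith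
  have hsources : ∀ ρ, 0 < ρ → IntegrableSources lam (soundPrimitive P) _ _ ρ := fun _ =>
    integrableSources_of_nhdsGT (M := M) hk hk₀ (by linarith) hβ₁ hcrit hM
  exact ⟨hsources, fun ρ hρ => kernelB₁_pos hM (hk.pos ρ hρ) (hk.deriv_pos ρ hρ) hρ,
    (hk₁.kernelB₁ hθ₂ hM).isSymbol.of_succ,
    isSymbol_kernelB₂_atTop hk hk₁ hθ₂ hM hsources⟩

end Pressure

theorem entropy_flux_kernel_coefficients_general {P Q₁ Q₂ : ℝ → ℝ}
    {r₁ r₂ γ₁ γ₂ κ₁ κ₂ C₁ C₂ β ε : ℝ} (hP : ContDiffOn ℝ 3 P (Ioi 0))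
    (hP' : ∀ ρ, 0 < ρ → 0 < deriv P ρ) (hr₁ : 0 < r₁) (hγ₁ : 1 < γ₁) (hγ₁3 : γ₁ < 3)
    (hκ₁ : 0 < κ₁) (hβ : (γ₁ - 1) / 2 < β) (hQ₁ : ContDiffOn ℝ 3 Q₁ (Ioi 0))
    (hPsmall : ∀ ρ ∈ Ioo 0 r₁, P ρ = κ₁ * ρ ^ γ₁ * (1 + Q₁ ρ))
    (hQ₁bd : ∀ ρ ∈ Ioo 0 r₁, ∀ j ≤ 3, |iteratedDeriv j Q₁ ρ| ≤ C₁ * ρ ^ (β - j))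
    (hγ₂ : 1 < γ₂) (hκ₂ : 0 < κ₂) (hε : 0 < ε) (hQ₂ : ContDiffOn ℝ 4 Q₂ (Ioi 0))
    (hPlarge : ∀ ρ, r₂ ≤ ρ → P ρ = κ₂ * ρ ^ γ₂ * (1 + Q₂ ρ))
    (hQ₂bd : ∀ ρ, r₂ ≤ ρ → ∀ j ≤ 4, |iteratedDeriv j Q₂ ρ| ≤ C₂ * ρ ^ (-ε - j))
    {lam M θ₁ θ₂ : ℝ} (hlam : lam = (3 - γ₁) / (2 * (γ₁ - 1)))
    (hM : M = (2 * lam / Real.sqrt (2 * lam + 1) * ∫ z in (-1 : ℝ)..1, (1 - z ^ 2) ^ lam)⁻¹)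
    (hθ₁ : θ₁ = (γ₁ - 1) / 2) (hθ₂ : θ₂ = (γ₂ - 1) / 2) {k a₁ b₁ b₂ : ℝ → ℝ}
    (hk : k = soundPrimitive P) (ha₁ : a₁ = kernelA₁ M lam k) (hb₁ : b₁ = kernelB₁ M lam k)
    (hb₂ : b₂ = kernelB₂ lam k a₁ b₁) :
    (∀ ρ, 0 < ρ → IntegrableSources lam k a₁ b₁ ρ) ∧ (∀ ρ, 0 < ρ → 0 < b₁ ρ) ∧
      ∃ C, 0 < C ∧ ∃ R, r₂ ≤ R ∧ ∀ ρ, R ≤ ρ →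
        |b₁ ρ| + ρ * |deriv b₁ ρ| + ρ ^ 2 * |deriv (deriv b₁) ρ| ≤
            C * ρ ^ ((1 : ℝ) / 2 - θ₂ / (2 * θ₁)) ∧
          |b₂ ρ| + ρ * |deriv b₂ ρ| + ρ ^ 2 * |deriv (deriv b₂) ρ| ≤
            C * ρ ^ ((1 : ℝ) / 2 - θ₂ * (1 + 1 / (2 * θ₁))) := by
  have hγ₁' : 0 < γ₁ - 1 := sub_pos.2 hγ₁
  have hlam₀ : 0 < lam := hlam ▸ div_pos (by linarith) (by linarith)
  have hcrit : (γ₁ - 1) / 2 * (lam + 1 / 2) = 1 / 2 := by rw [hlam]; field_simp; ring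
  have hP₀ := smoothlyVarying_pressure_nhdsGT (n := 2) hr₁ hκ₁ (by linarith) hQ₁ hPsmall hQ₁bd
  have hP₁ := smoothlyVarying_pressure_atTop (n := 3) (β := min ε ((γ₂ - 1) / 4)) hκ₂
    (lt_min hε (by linarith)) (min_le_left _ _) hQ₂ hPlarge hQ₂bd
  have hβ₂ : 0 < (γ₂ - 1) / 2 + -min ε ((γ₂ - 1) / 4) := by
    linarith [min_le_right ε ((γ₂ - 1) / 4)]
  have hM₀ : 0 < M := hM ▸ kernelConstant_pos hlam₀
  have hhalf : lam + 1 / 2 = 1 / (2 * θ₁) := by rw [hθ₁, hlam]; field_simp; ring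
  obtain ⟨hsources, hpos, hsymb₁, hsymb₂⟩ :=
    kernel_coefficients_of_smoothlyVarying hP hP' hP₀ hP₁ hγ₁ hγ₂ hβ hβ₂ hM₀ hcrit hk ha₁ hb₁
  rw [← hθ₂, hhalf, mul_one_div] at hsymb₁
  rw [← hb₂, ← hθ₂, show lam + 3 / 2 = 1 + (lam + 1 / 2) by ring, hhalf] at hsymb₂
  exact ⟨hsources, hpos, hsymb₁.exists_forall_ge_abs_add_le hsymb₂ r₂⟩

theorem entropy_flux_kernel_coefficients
    (P Q₁ Q₂ : ℝ → ℝ) (ρstar ρss γ₁ γ₂ κ₁ κ₂ Cs Css εe : ℝ)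
    (hPC1 : ContDiffOn ℝ 1 P (Ici 0))
    (hPC4 : ContDiffOn ℝ 4 P (Ioi 0))
    (hH1 : ∀ ρ : ℝ, 0 < ρ → 0 < deriv P ρ ∧ 0 < 2 * deriv P ρ + ρ * deriv (deriv P) ρ)
    (hρstar : 0 < ρstar) (hγ₁ : 1 < γ₁) (hγ₁3 : γ₁ < 3) (hκ₁ : 0 < κ₁) (hCs : 0 < Cs)
    (hQ₁C4 : ContDiffOn ℝ 4 Q₁ (Ioi 0))
    (hPsmall : ∀ ρ ∈ Ico (0:ℝ) ρstar, P ρ = κ₁ * ρ ^ γ₁ * (1 + Q₁ ρ))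
    (hQ₁bd : ∀ ρ ∈ Ioo (0:ℝ) ρstar, ∀ j : ℕ, j ≤ 4 →
      |iteratedDeriv j Q₁ ρ| ≤ Cs * ρ ^ (γ₁ - 1 - (j : ℝ)))
    (hρss : ρstar < ρss) (hγ₂ : 6/5 < γ₂) (hγ₂1 : γ₂ ≤ γ₁) (hκ₂ : 0 < κ₂)
    (hεe : 0 < εe) (hCss : 0 < Css)
    (hQ₂C4 : ContDiffOn ℝ 4 Q₂ (Ioi 0))
    (hPlarge : ∀ ρ : ℝ, ρss ≤ ρ → P ρ = κ₂ * ρ ^ γ₂ * (1 + Q₂ ρ))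
    (hQ₂bd : ∀ ρ : ℝ, ρss ≤ ρ → ∀ j : ℕ, j ≤ 4 →
      |iteratedDeriv j Q₂ ρ| ≤ Css * ρ ^ (-εe - (j : ℝ)))
    (lam₁ Mlam θ₁ θ₂ : ℝ)
    (hlam₁ : lam₁ = (3 - γ₁) / (2 * (γ₁ - 1)))
    (hMlam : Mlam = (2 * lam₁ / Real.sqrt (2 * lam₁ + 1) * ∫ z in (-1:ℝ)..1, (1 - z ^ 2) ^ lam₁)⁻¹)
    (hθ₁ : θ₁ = (γ₁ - 1) / 2) (hθ₂ : θ₂ = (γ₂ - 1) / 2)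
    (k a₁ a₂ : ℝ → ℝ)
    (hk : ∀ ρ : ℝ, k ρ = ∫ y in (0:ℝ)..ρ, Real.sqrt (deriv P y) / y)
    (ha₁ : ∀ ρ : ℝ, a₁ ρ = Mlam * k ρ ^ (-lam₁) * deriv k ρ ^ (-(1:ℝ)/2))
    (ha₂ : ∀ ρ : ℝ, a₂ ρ = -(4 * (lam₁ + 1))⁻¹ * k ρ ^ (-lam₁ - 1) * deriv k ρ ^ (-(1:ℝ)/2) *
      ∫ s in (0:ℝ)..ρ, k s ^ lam₁ * deriv k s ^ (-(1:ℝ)/2) * deriv (deriv a₁) s)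
    (b₁ b₂ : ℝ → ℝ)
    (hb₁ : ∀ ρ : ℝ, b₁ ρ = Mlam * ρ * k ρ ^ (-lam₁ - 1) * deriv k ρ ^ ((1:ℝ)/2))
    (hb₂ : ∀ ρ : ℝ, b₂ ρ =
      -(4 * (lam₁ + 1))⁻¹ * ρ * deriv k ρ ^ ((1:ℝ)/2) * k ρ ^ (-(lam₁ + 2)) *
        (∫ s in (0:ℝ)..ρ, k s ^ lam₁ * deriv k s ^ (-(1:ℝ)/2) * deriv (deriv a₁) s)
      - (4 * (lam₁ + 1))⁻¹ * k ρ ^ (-(lam₁ + 2)) * deriv k ρ ^ (-(1:ℝ)/2) *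
        (∫ s in (0:ℝ)..ρ, k s ^ (lam₁ + 1) * deriv k s ^ (-(1:ℝ)/2) * deriv (deriv b₁) s)
      + (4 * (lam₁ + 1))⁻¹ * k ρ ^ (-(lam₁ + 2)) * deriv k ρ ^ (-(1:ℝ)/2) *
        (∫ s in (0:ℝ)..ρ, s * k s ^ lam₁ * deriv k s ^ ((1:ℝ)/2) * deriv (deriv a₁) s)) :
    (∀ ρ : ℝ, 0 < ρ →
      IntervalIntegrable
        (fun s => k s ^ lam₁ * deriv k s ^ (-(1:ℝ)/2) * deriv (deriv a₁) s) volume 0 ρ ∧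
      IntervalIntegrable
        (fun s => k s ^ (lam₁ + 1) * deriv k s ^ (-(1:ℝ)/2) * deriv (deriv b₁) s) volume 0 ρ ∧
      IntervalIntegrable
        (fun s => s * k s ^ lam₁ * deriv k s ^ ((1:ℝ)/2) * deriv (deriv a₁) s) volume 0 ρ) ∧
    (∀ ρ : ℝ, 0 < ρ → 0 < b₁ ρ) ∧
    (∃ C : ℝ, 0 < C ∧ ∃ ρbar : ℝ, ρss ≤ ρbar ∧ ∀ ρ : ℝ, ρbar ≤ ρ →
      (|b₁ ρ| + ρ * |deriv b₁ ρ| + ρ ^ 2 * |deriv (deriv b₁) ρ|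
        ≤ C * ρ ^ ((1:ℝ)/2 - θ₂ / (2 * θ₁))) ∧
      (|b₂ ρ| + ρ * |deriv b₂ ρ| + ρ ^ 2 * |deriv (deriv b₂) ρ|
        ≤ C * ρ ^ ((1:ℝ)/2 - θ₂ * (1 + 1 / (2 * θ₁))))) :=
  entropy_flux_kernel_coefficients_general (hPC4.of_le (by norm_num)) (fun ρ hρ => (hH1 ρ hρ).1)
    hρstar hγ₁ hγ₁3 hκ₁ (by linarith) (hQ₁C4.of_le (by norm_num))
    (fun ρ hρ => hPsmall ρ (Ioo_subset_Ico_self hρ))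
    (fun ρ hρ j hj => hQ₁bd ρ hρ j (hj.trans (by norm_num))) (by linarith) hκ₂ hεe hQ₂C4 hPlarge
    hQ₂bd hlam₁ hMlam hθ₁ hθ₂ (funext hk) (funext ha₁) (funext hb₁) (funext hb₂)
end
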